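/- For q ≥ 2, V_d is the orthogonal direct sum V_0 ⊕ V_1 ⊕ V_2, with dim V_1 = d(d+1)/2 − 1 and dim V_2 = d(d−1)/2 − 1, and each of V_0, V_1, V_2 is invariant under φ⊗² and carries an irreducible subrepresentation of φ⊗². For q = 1, V_2 = 0 and V_0, V_1 are invariant and carry irreducible subrepresentations. -/

import Mathlib

open Matrix MeasureTheory
open scoped Kronecker

noncomputable section

namespace CliffordPaper

/-- The single-qubit Pauli matrices `1, X, Y, Z`. -/
def pauli1 : Fin 4 → Matrix (Fin 2) (Fin 2) ℂ :=
  ![1, !![0, 1; 1, 0], !![0, -Complex.I; Complex.I, 0], !![1, 0; 0, -1]]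

/-- Index type for the computational basis of `q` qubits. -/
abbrev Idx (q : ℕ) := Fin q → Fin 2

/-- The space `M_d` of `d × d` complex matrices, `d = 2^q`. -/
abbrev Mat (q : ℕ) := Matrix (Idx q) (Idx q) ℂ

/-- The space `M_d ⊗ M_d`, realized as matrices indexed by the product index set
(the tensor factors combine via the Kronecker product `⊗ₖ`). -/
abbrev BMat (q : ℕ) := Matrix (Idx q × Idx q) (Idx q × Idx q) ℂ

/-- The `q`-fold Kronecker product of single-qubit Paulis with labels `a`. -/
def PauliOp {q : ℕ} (a : Fin q → Fin 4) : Mat q :=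
  Matrix.of fun x y => ∏ i, pauli1 (a i) (x i) (y i)

/-- `√d` as a complex number, where `d = 2^q`. -/
def sqrtd (q : ℕ) : ℂ := (Real.sqrt (2 ^ q) : ℝ)

/-- The set `σ̂_q` of normalized Pauli operators. -/
def sigmaHat (q : ℕ) : Set (Mat q) :=
  {M | ∃ a : Fin q → Fin 4, M = (sqrtd q)⁻¹ • PauliOp a}

/-- The normalized identity `σ₀ = 1/√d`. -/
def sigma0 (q : ℕ) : Mat q := (sqrtd q)⁻¹ • (1 : Mat q)

/-- `σ_q = σ̂_q \ {σ₀}`. -/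
def sigmaSet (q : ℕ) : Set (Mat q) := sigmaHat q \ {sigma0 q}

/-- `N_τ`: the normalized nonidentity Paulis anticommuting with `τ`. -/
def NSet {q : ℕ} (τ : Mat q) : Set (Mat q) :=
  {σ | σ ∈ sigmaSet q ∧ σ * τ + τ * σ = 0}

/-- `C_τ`: the normalized nonidentity Paulis distinct from `τ` commuting with `τ`. -/
def CSet {q : ℕ} (τ : Mat q) : Set (Mat q) :=
  {σ | σ ∈ sigmaSet q ∧ σ ≠ τ ∧ σ * τ = τ * σ}

/-- `Ĉ_τ`: the normalized Paulis commuting with `τ`. -/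
def CHatSet {q : ℕ} (τ : Mat q) : Set (Mat q) :=
  {σ | σ ∈ sigmaHat q ∧ σ * τ = τ * σ}

/-- The normalized product `σ·τ = √d στ`. -/
def nprod {q : ℕ} (σ τ : Mat q) : Mat q := sqrtd q • (σ * τ)

/-- The Clifford normalizer `𝒩_q`: unitaries mapping normalized Paulis to
signed normalized Paulis under conjugation. -/
def Cliff (q : ℕ) : Set (Mat q) :=
  {U | U ∈ Matrix.unitaryGroup (Idx q) ℂ ∧
    ∀ σ ∈ sigmaHat q, ∃ τ ∈ sigmaHat q, U * σ * Uᴴ = τ ∨ U * σ * Uᴴ = -τ}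

/-- The two-copy representation `φ⊗²(U) : A ⊗ B ↦ (UAU†) ⊗ (UBU†)`, extended linearly. -/
def twoCopy {q : ℕ} (U : Mat q) : BMat q →ₗ[ℂ] BMat q where
  toFun M := (U ⊗ₖ U) * M * (U ⊗ₖ U)ᴴ
  map_add' M N := by
    show (U ⊗ₖ U) * (M + N) * (U ⊗ₖ U)ᴴ = (U ⊗ₖ U) * M * (U ⊗ₖ U)ᴴ + (U ⊗ₖ U) * N * (U ⊗ₖ U)ᴴ
    rw [Matrix.mul_add, Matrix.add_mul]
  map_smul' c M := by
    show (U ⊗ₖ U) * (c • M) * (U ⊗ₖ U)ᴴ = c • ((U ⊗ₖ U) * M * (U ⊗ₖ U)ᴴ)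
    rw [Matrix.mul_smul, Matrix.smul_mul]

/-- The Hilbert–Schmidt inner product `⟨A, B⟩ = tr(A† B)`. -/
def hs {q : ℕ} (A B : BMat q) : ℂ := (Aᴴ * B).trace

/-- A subspace is invariant under the two-copy representation of `𝒩_q`. -/
def IsInvariant (q : ℕ) (W : Submodule ℂ (BMat q)) : Prop :=
  ∀ U ∈ Cliff q, ∀ v ∈ W, twoCopy U v ∈ W

/-- A nonzero invariant subspace carries an irreducible subrepresentation. -/
def CarriesIrred (q : ℕ) (W : Submodule ℂ (BMat q)) : Prop :=
  W ≠ ⊥ ∧ IsInvariant q W ∧ ∀ W' ≤ W, IsInvariant q W' → W' = ⊥ ∨ W' = W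

/-- Two invariant subspaces carry equivalent subrepresentations: there is a linear
isomorphism between them intertwining the two-copy representation. -/
def EquivRep (q : ℕ) (W W' : Submodule ℂ (BMat q)) : Prop :=
  ∃ T : BMat q →ₗ[ℂ] BMat q, Submodule.map T W = W' ∧
    (∀ x ∈ W, T x = 0 → x = 0) ∧
    ∀ U ∈ Cliff q, ∀ x ∈ W, T (twoCopy U x) = twoCopy U (T x)

/-- `S_{σ,τ} = (σ⊗τ + τ⊗σ)/√2`. -/
def SVec {q : ℕ} (σ τ : Mat q) : BMat q :=
  ((Real.sqrt 2 : ℂ))⁻¹ • (σ ⊗ₖ τ + τ ⊗ₖ σ)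

/-- `A_{σ,τ} = (σ⊗τ − τ⊗σ)/√2`. -/
def AVec {q : ℕ} (σ τ : Mat q) : BMat q :=
  ((Real.sqrt 2 : ℂ))⁻¹ • (σ ⊗ₖ τ - τ ⊗ₖ σ)

/-- The trivial sector `V_id`. -/
def Vid (q : ℕ) : Submodule ℂ (BMat q) :=
  Submodule.span ℂ {sigma0 q ⊗ₖ sigma0 q}

/-- The right adjoint sector `V_r`. -/
def Vr (q : ℕ) : Submodule ℂ (BMat q) :=
  Submodule.span ℂ {M | ∃ τ ∈ sigmaSet q, M = sigma0 q ⊗ₖ τ}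

/-- The left adjoint sector `V_l`. -/
def Vl (q : ℕ) : Submodule ℂ (BMat q) :=
  Submodule.span ℂ {M | ∃ τ ∈ sigmaSet q, M = τ ⊗ₖ sigma0 q}

/-- The diagonal sector `V_d`. -/
def Vdiag (q : ℕ) : Submodule ℂ (BMat q) :=
  Submodule.span ℂ {M | ∃ τ ∈ sigmaSet q, M = τ ⊗ₖ τ}

/-- The symmetric commuting sector `V_[S]`. -/
def VScom (q : ℕ) : Submodule ℂ (BMat q) :=
  Submodule.span ℂ {M | ∃ τ ∈ sigmaSet q, ∃ σ ∈ CSet τ, M = SVec σ τ}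

/-- The symmetric anti-commuting sector `V_{S}`. -/
def VSanti (q : ℕ) : Submodule ℂ (BMat q) :=
  Submodule.span ℂ {M | ∃ τ ∈ sigmaSet q, ∃ σ ∈ NSet τ, M = SVec σ τ}

/-- The antisymmetric commuting sector `V_[A]`. -/
def VAcom (q : ℕ) : Submodule ℂ (BMat q) :=
  Submodule.span ℂ {M | ∃ τ ∈ sigmaSet q, ∃ σ ∈ CSet τ, M = AVec σ τ}

/-- The antisymmetric anti-commuting sector `V_{A}`. -/
def VAanti (q : ℕ) : Submodule ℂ (BMat q) :=
  Submodule.span ℂ {M | ∃ τ ∈ sigmaSet q, ∃ σ ∈ NSet τ, M = AVec σ τ}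

/-- `V_[A]` presented with the spanning vectors `A_{σ,σ·τ}`, `σ ∈ C_τ`. -/
def VAcom' (q : ℕ) : Submodule ℂ (BMat q) :=
  Submodule.span ℂ {M | ∃ τ ∈ sigmaSet q, ∃ σ ∈ CSet τ, M = AVec σ (nprod σ τ)}

/-- `V_0 = span{Σ_{σ∈σ_q} σ⊗σ}`. -/
def V0diag (q : ℕ) : Submodule ℂ (BMat q) :=
  Submodule.span ℂ {∑ᶠ σ ∈ sigmaSet q, σ ⊗ₖ σ}

/-- `V_1`, the "positive" part of the diagonal sector. -/
def V1diag (q : ℕ) : Submodule ℂ (BMat q) :=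
  Submodule.span ℂ {v | ∃ lam : Mat q → ℂ,
    v = ∑ᶠ σ ∈ sigmaSet q, lam σ • (σ ⊗ₖ σ) ∧
    (∑ᶠ σ ∈ sigmaSet q, lam σ) = 0 ∧
    ∀ τ ∈ sigmaSet q, (∑ᶠ σ ∈ NSet τ, lam σ) = -((2 ^ q : ℂ) / 2) * lam τ}

/-- `V_2`, the "negative" part of the diagonal sector. -/
def V2diag (q : ℕ) : Submodule ℂ (BMat q) :=
  Submodule.span ℂ {v | ∃ lam : Mat q → ℂ,
    v = ∑ᶠ σ ∈ sigmaSet q, lam σ • (σ ⊗ₖ σ) ∧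
    (∑ᶠ σ ∈ sigmaSet q, lam σ) = 0 ∧
    ∀ τ ∈ sigmaSet q, (∑ᶠ σ ∈ NSet τ, lam σ) = ((2 ^ q : ℂ) / 2) * lam τ}

/-- `v^[adj]_τ = (2|C_τ|)^{-1/2} Σ_{σ∈C_τ} S_{σ,σ·τ}`. -/
def vadjS {q : ℕ} (τ : Mat q) : BMat q :=
  ((Real.sqrt (2 * ((CSet τ).ncard : ℝ)) : ℂ))⁻¹ • ∑ᶠ σ ∈ CSet τ, SVec σ (nprod σ τ)

/-- `v^{adj}_τ = (2|N_τ|)^{-1/2} Σ_{σ∈N_τ} A_{σ,iσ·τ}`. -/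
def vadjA {q : ℕ} (τ : Mat q) : BMat q :=
  ((Real.sqrt (2 * ((NSet τ).ncard : ℝ)) : ℂ))⁻¹ •
    ∑ᶠ σ ∈ NSet τ, AVec σ (Complex.I • nprod σ τ)

/-- The symmetric adjoint sector `V_[adj]`. -/
def VadjS (q : ℕ) : Submodule ℂ (BMat q) :=
  Submodule.span ℂ {M | ∃ τ ∈ sigmaSet q, M = vadjS τ}

/-- The antisymmetric adjoint sector `V_{adj}`. -/
def VadjA (q : ℕ) : Submodule ℂ (BMat q) :=
  Submodule.span ℂ {M | ∃ τ ∈ sigmaSet q, M = vadjA τ}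

/-- The orthogonal complement `V^⊥_{adj}` of `V_{adj}` inside `V_{A}`. -/
def VadjAperp (q : ℕ) : Submodule ℂ (BMat q) :=
  Submodule.span ℂ {v | v ∈ VAanti q ∧ ∀ w ∈ VadjA q, hs w v = 0}

/-- `V_{1}^τ`. -/
def V1symτ (q : ℕ) (τ : Mat q) : Submodule ℂ (BMat q) :=
  Submodule.span ℂ {v | ∃ lam : Mat q → ℂ,
    v = ∑ᶠ σ ∈ NSet τ, lam σ • SVec σ (Complex.I • nprod σ τ) ∧
    ∀ ν ∈ NSet τ, (∑ᶠ σ ∈ NSet τ ∩ CSet ν, lam σ) - (∑ᶠ σ ∈ NSet τ ∩ NSet ν, lam σ)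
      = ((2 ^ q : ℂ) / 2) * lam ν}

/-- `V_{2}^τ`. -/
def V2symτ (q : ℕ) (τ : Mat q) : Submodule ℂ (BMat q) :=
  Submodule.span ℂ {v | ∃ lam : Mat q → ℂ,
    v = ∑ᶠ σ ∈ NSet τ, lam σ • SVec σ (Complex.I • nprod σ τ) ∧
    ∀ ν ∈ NSet τ, (∑ᶠ σ ∈ NSet τ ∩ CSet ν, lam σ) - (∑ᶠ σ ∈ NSet τ ∩ NSet ν, lam σ)
      = -((2 ^ q : ℂ) / 2) * lam ν}

/-- `V_{1} = ⊕_τ V_{1}^τ`. -/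
def V1sym (q : ℕ) : Submodule ℂ (BMat q) := ⨆ τ ∈ sigmaSet q, V1symτ q τ

/-- `V_{2} = ⊕_τ V_{2}^τ`. -/
def V2sym (q : ℕ) : Submodule ℂ (BMat q) := ⨆ τ ∈ sigmaSet q, V2symτ q τ

/-- The defining property of the map `Θ` on `V_[A]`. -/
def ThetaProp (q : ℕ) (Θ : BMat q →ₗ[ℂ] BMat q) : Prop :=
  ∀ τ ∈ sigmaSet q, ∀ σ ∈ CSet τ,
    Θ (AVec σ (nprod σ τ)) =
      (∑ᶠ σ' ∈ NSet τ ∩ CSet σ, AVec σ' (Complex.I • nprod σ' τ)) -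
      ∑ᶠ σ' ∈ NSet τ ∩ NSet σ, AVec σ' (Complex.I • nprod σ' τ)

/-- `V` = span of off-diagonal products `σ⊗σ̂`, `σ ≠ σ̂`. -/
def Voff (q : ℕ) : Submodule ℂ (BMat q) :=
  Submodule.span ℂ {M | ∃ σ ∈ sigmaSet q, ∃ σ' ∈ sigmaSet q, σ ≠ σ' ∧ M = σ ⊗ₖ σ'}

/-- `V^τ` = span of the `σ⊗σ̂` with `σ·σ̂ ∈ {τ, −τ, iτ, −iτ}`. -/
def Vtau (q : ℕ) (τ : Mat q) : Submodule ℂ (BMat q) :=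
  Submodule.span ℂ {M | ∃ σ ∈ sigmaSet q, ∃ σ' ∈ sigmaSet q,
    (nprod σ σ' = τ ∨ nprod σ σ' = -τ ∨ nprod σ σ' = Complex.I • τ ∨
      nprod σ σ' = -(Complex.I • τ)) ∧ M = σ ⊗ₖ σ'}

/-!
The Pauli operators on `q` qubits are labelled by the symplectic space `𝔽₂^{2q}`, and two of them
commute or anticommute according to the symplectic form `B`. A Clifford unitary permutes the labels
by an isometry of `B`, and the Clifford unitaries `(1 + iP) / √2`, for `P` a Pauli operator, induce
the symplectic transvections. Hence `V_d` is the permutation representation on the functions on the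
symplectic space that vanish at `0`.

Up to an affine change of the eigenvalue, the equations defining `V_1` and `V_2` say that the
coefficient function is an eigenvector of the symplectic Fourier transform `F`, with kernel
`(-1)^{B(a, b)}`, for the eigenvalues `d` and `-d`. Since `F² = d²`, these two eigenspaces fill the
space, and `tr F = d²` gives the dimensions. For irreducibility, a nonzero invariant subspace
contains a nonzero function fixed by the stabilizer of a point `t`, and within one eigenspace such a
function is determined by its value at `t`.
-/

section PermutationRepresentation

variable {𝕜 X : Type*} [RCLike 𝕜]

/-- The space of functions that vanish at `x`. -/
def vanishingAt (x : X) : Submodule 𝕜 (EuclideanSpace 𝕜 X) :=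
  LinearMap.ker (PiLp.projₗ 2 (fun _ => 𝕜) x)

theorem mem_vanishingAt_iff {x : X} {l : EuclideanSpace 𝕜 X} : l ∈ vanishingAt x ↔ l x = 0 :=
  Iff.rfl

variable [Fintype X]

/-- The permutation representation of `Equiv.Perm X` on the Euclidean space of functions on `X`. -/
def permute (𝕜 : Type*) [RCLike 𝕜] :
    Equiv.Perm X →* (EuclideanSpace 𝕜 X ≃ₗᵢ[𝕜] EuclideanSpace 𝕜 X) where
  toFun π := LinearIsometryEquiv.piLpCongrLeft 2 𝕜 𝕜 π
  map_one' := LinearIsometryEquiv.ext fun _ => rfl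
  map_mul' _ _ := LinearIsometryEquiv.ext fun _ => rfl

theorem permute_apply (π : Equiv.Perm X) (l : EuclideanSpace 𝕜 X) (x : X) :
    permute 𝕜 π l x = l (π.symm x) :=
  rfl

theorem permute_apply_apply (π : Equiv.Perm X) (l : EuclideanSpace 𝕜 X) (x : X) :
    permute 𝕜 π l (π x) = l x := by
  rw [permute_apply, π.symm_apply_apply]

theorem permute_single [DecidableEq X] (π : Equiv.Perm X) (x : X) (c : 𝕜) :
    permute 𝕜 π (EuclideanSpace.single x c) = EuclideanSpace.single (π x) c :=
  EuclideanSpace.piLpCongrLeft_single π x c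

/-- The group of permutations of `X` that map the function space `W` onto itself. -/
def permStabilizer (W : Submodule 𝕜 (EuclideanSpace 𝕜 X)) : Subgroup (Equiv.Perm X) where
  carrier := {π | W.map ((permute 𝕜 π).toLinearEquiv : _ →ₗ[𝕜] EuclideanSpace 𝕜 X) = W}
  one_mem' := Set.mem_ofPred.mpr (Submodule.map_id W)
  mul_mem' {π ρ} hπ hρ := by
    have hcomp := Submodule.map_comp ((permute 𝕜 ρ).toLinearEquiv : _ →ₗ[𝕜] EuclideanSpace 𝕜 X)
      ((permute 𝕜 π).toLinearEquiv : _ →ₗ[𝕜] EuclideanSpace 𝕜 X) W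
    rw [hρ.out, hπ.out] at hcomp
    exact Set.mem_ofPred.mpr hcomp
  inv_mem' {π} hπ := by
    refine Set.mem_ofPred.mpr ?_
    nth_rw 1 [← hπ.out, ← Submodule.map_comp]
    convert Submodule.map_id W
    ext l x
    simp [permute_apply, Equiv.Perm.inv_def]

theorem map_permute_of_mem_permStabilizer {W : Submodule 𝕜 (EuclideanSpace 𝕜 X)}
    {π : Equiv.Perm X} (hπ : π ∈ permStabilizer W) :
    W.map ((permute 𝕜 π).toLinearEquiv : _ →ₗ[𝕜] EuclideanSpace 𝕜 X) = W :=
  hπ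

theorem mem_permStabilizer_iff {W : Submodule 𝕜 (EuclideanSpace 𝕜 X)} {π : Equiv.Perm X} :
    π ∈ permStabilizer W ↔ ∀ l ∈ W, permute 𝕜 π l ∈ W := by
  refine ⟨fun hπ l hl => ?_, fun h => ?_⟩
  · rw [← map_permute_of_mem_permStabilizer hπ]
    exact Submodule.mem_map_of_mem hl
  · exact Submodule.eq_of_le_of_finrank_eq (Submodule.map_le_iff_le_comap.mpr h)
      (LinearEquiv.finrank_map_eq _ W)

theorem permStabilizer_le_permStabilizer_orthogonal (W : Submodule 𝕜 (EuclideanSpace 𝕜 X)) :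
    permStabilizer W ≤ permStabilizer Wᗮ := fun π hπ => by
  refine (Submodule.map_orthogonal_equiv W (permute 𝕜 π)).trans ?_
  rw [map_permute_of_mem_permStabilizer hπ]

theorem permStabilizer_inf_permStabilizer_le (W W' : Submodule 𝕜 (EuclideanSpace 𝕜 X)) :
    permStabilizer W ⊓ permStabilizer W' ≤ permStabilizer (W ⊓ W') := fun _ hπ =>
  mem_permStabilizer_iff.mpr fun l hl =>
    ⟨mem_permStabilizer_iff.mp hπ.1 l hl.1, mem_permStabilizer_iff.mp hπ.2 l hl.2⟩

theorem starProjection_permute {W : Submodule 𝕜 (EuclideanSpace 𝕜 X)} {π : Equiv.Perm X}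
    (hπ : π ∈ permStabilizer W) (l : EuclideanSpace 𝕜 X) :
    W.starProjection (permute 𝕜 π l) = permute 𝕜 π (W.starProjection l) := by
  have h := Submodule.starProjection_map_apply (permute 𝕜 π) W (permute 𝕜 π l)
  rw [LinearIsometryEquiv.symm_apply_apply] at h
  rw [← h]
  congr!
  exact (map_permute_of_mem_permStabilizer hπ).symm

section Zonal

variable {W E : Submodule 𝕜 (EuclideanSpace 𝕜 X)} {G : Subgroup (Equiv.Perm X)}
  {t : X}

theorem inner_starProjection_single [DecidableEq X] {l : EuclideanSpace 𝕜 X} (hl : l ∈ W) :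
    inner 𝕜 (W.starProjection (EuclideanSpace.single t 1)) l = l t := by
  rw [Submodule.inner_starProjection_left_eq_right, Submodule.starProjection_eq_self_iff.mpr hl]
  rw [EuclideanSpace.inner_single_left, map_one, one_mul]

theorem permute_starProjection_single [DecidableEq X] {π : Equiv.Perm X} (hπ : π ∈ permStabilizer W)
    (ht : π t = t) :
    permute 𝕜 π (W.starProjection (EuclideanSpace.single t 1)) =
      W.starProjection (EuclideanSpace.single t 1) := by
  rw [← starProjection_permute hπ, permute_single, ht]

theorem eq_bot_of_starProjection_single_eq_zero [DecidableEq X] (hG : G ≤ permStabilizer W)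
    (horbit : ∀ l ∈ W, ∀ x, l x ≠ 0 → ∃ π ∈ G, π t = x)
    (ht : W.starProjection (EuclideanSpace.single t 1) = 0) : W = ⊥ := by
  have hvanish : ∀ l ∈ W, l t = 0 := fun l hl => by
    rw [← inner_starProjection_single hl, ht, inner_zero_left]
  refine (Submodule.eq_bot_iff W).mpr fun l hl => PiLp.ext fun x => ?_
  by_contra hx
  obtain ⟨π, hπ, rfl⟩ := horbit l hl x hx
  have h := hvanish _ (mem_permStabilizer_iff.mp (hG (inv_mem hπ)) l hl)
  exact hx h

/-- If the functions in `E` fixed by the stabilizer of `t` are determined by their value at `t`,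
then `E` is irreducible: the projections of the point mass at `t` to an invariant subspace and to
its complement are two such functions, and they are orthogonal. -/
theorem eq_bot_or_eq_of_zonal (hWE : W ≤ E) (hGW : G ≤ permStabilizer W)
    (hGE : G ≤ permStabilizer E) (horbit : ∀ l ∈ E, ∀ x, l x ≠ 0 → ∃ π ∈ G, π t = x)
    (hzonal : ∀ l ∈ E, (∀ π ∈ G, π t = t → permute 𝕜 π l = l) → l t = 0 → l = 0) :
    W = ⊥ ∨ W = E := by
  classical
  set W' := Wᗮ ⊓ E
  have hGW' : G ≤ permStabilizer W' :=
    (le_inf (hGW.trans (permStabilizer_le_permStabilizer_orthogonal W)) hGE).trans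
      (permStabilizer_inf_permStabilizer_le _ _)
  set f := W.starProjection (EuclideanSpace.single t 1)
  set g := W'.starProjection (EuclideanSpace.single t 1)
  have hf : f ∈ W := W.starProjection_apply_mem _
  have hg : g ∈ W' := W'.starProjection_apply_mem _
  have hproportional : f t • g - g t • f = 0 := by
    refine hzonal _ (sub_mem (E.smul_mem _ hg.2) (E.smul_mem _ (hWE hf))) (fun π hπ ht => ?_) ?_
    · rw [map_sub, map_smul, map_smul, permute_starProjection_single (hGW hπ) ht,
        permute_starProjection_single (hGW' hπ) ht]
    · simp [mul_comm]
  have hft : f t = 0 ∨ g = 0 := by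
    have h : inner 𝕜 g (f t • g - g t • f) = 0 := by rw [hproportional, inner_zero_right]
    rw [inner_sub_right, inner_smul_right, inner_smul_right,
      W.inner_left_of_mem_orthogonal hf hg.1, mul_zero, sub_zero] at h
    simpa using h
  rcases hft with hft | hg0
  · left
    refine eq_bot_of_starProjection_single_eq_zero hGW (fun l hl => horbit l (hWE hl)) ?_
    exact inner_self_eq_zero.mp ((inner_starProjection_single hf).trans hft)
  · right
    have hW' : W' = ⊥ := eq_bot_of_starProjection_single_eq_zero hGW'
      (fun l hl => horbit l hl.2) hg0
    rw [← Submodule.sup_orthogonal_inf_of_hasOrthogonalProjection hWE]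
    change W = W ⊔ W'
    rw [hW', sup_bot_eq]

end Zonal

end PermutationRepresentation

section SymplecticSpace

variable {V : Type*} [AddCommGroup V] [Module (ZMod 2) V] {B : LinearMap.BilinForm (ZMod 2) V}

section Sign

theorem eq_one_of_ne_zero : ∀ {z : ZMod 2}, z ≠ 0 → z = 1 := by
  decide

/-- The additive character `b ↦ (-1) ^ B a b`. -/
def symplecticChar (B : LinearMap.BilinForm (ZMod 2) V) (a : V) : AddChar V ℂ :=
  (AddChar.zmodChar 2 (neg_one_sq (R := ℂ))).compAddMonoidHom (B a).toAddMonoidHom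

theorem symplecticChar_apply (a b : V) :
    symplecticChar B a b = if B a b = 0 then 1 else -1 := by
  have h : ∀ z : ZMod 2, (-1 : ℂ) ^ z.val = if z = 0 then 1 else -1 := by
    intro z
    fin_cases z
    · exact (pow_zero _).trans (if_pos rfl).symm
    · exact (pow_one _).trans (if_neg one_ne_zero).symm
  exact h (B a b)

theorem symplecticChar_eq_one_iff (a b : V) : symplecticChar B a b = 1 ↔ B a b = 0 := by
  rw [symplecticChar_apply]
  split_ifs with h <;> norm_num [h]

theorem symplecticChar_eq_neg_of_ne {a b a' b' : V} (h : B a b ≠ B a' b') :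
    symplecticChar B a b = -symplecticChar B a' b' := by
  have hzero : B a b = 0 ↔ B a' b' ≠ 0 :=
    ⟨fun h0 h0' => h (h0.trans h0'.symm), fun h0' => by_contra fun h0 =>
      h ((eq_one_of_ne_zero h0).trans (eq_one_of_ne_zero h0').symm)⟩
  rw [symplecticChar_apply, symplecticChar_apply]
  by_cases h0 : B a b = 0
  · rw [if_pos h0, if_neg (hzero.mp h0), neg_neg]
  · rw [if_neg h0, if_pos (not_not.mp (hzero.not.mp h0))]

theorem symplecticChar_mul_self (a b : V) :
    symplecticChar B a b * symplecticChar B a b = 1 := by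
  rw [symplecticChar_apply]
  split_ifs <;> norm_num

theorem symplecticChar_zero : symplecticChar B 0 = 1 := by
  ext b
  simp [symplecticChar_apply]

theorem form_comm (hB : B.IsAlt) (a b : V) : B a b = B b a := by
  rw [← LinearMap.BilinForm.IsAlt.neg_eq hB b a, ZModModule.neg_eq_self]

theorem symplecticChar_comm (hB : B.IsAlt) (a b : V) :
    symplecticChar B a b = symplecticChar B b a := by
  rw [symplecticChar_apply, symplecticChar_apply, form_comm hB]

theorem symplecticChar_add_left (hB : B.IsAlt) (a b c : V) :
    symplecticChar B (a + b) c = symplecticChar B a c * symplecticChar B b c := by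
  rw [symplecticChar_comm hB, AddChar.map_add_eq_mul, symplecticChar_comm hB c,
    symplecticChar_comm hB c]

theorem sum_symplecticChar [Fintype V] [DecidableEq V] (hB : B.SeparatingLeft) (a : V) :
    ∑ b, symplecticChar B a b = if a = 0 then (Fintype.card V : ℂ) else 0 := by
  have h : symplecticChar B a = 0 ↔ a = 0 := by
    refine ⟨fun ha => hB a fun b => ?_, fun ha => ha ▸ symplecticChar_zero⟩
    rw [← symplecticChar_eq_one_iff, ha, AddChar.zero_apply]
  classical
  rw [AddChar.sum_eq_ite]
  simp only [h]

theorem sum_symplecticChar_mul [Fintype V] (a : V) (l : V → ℂ) :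
    ∑ b, symplecticChar B a b * l b = ∑ b, l b - 2 * ∑ b with B a b ≠ 0, l b := by
  rw [Finset.sum_filter, Finset.mul_sum, ← Finset.sum_sub_distrib]
  refine Finset.sum_congr rfl fun b _ => ?_
  rw [symplecticChar_apply]
  split_ifs with h0 h1
  · exact absurd h0 h1
  · ring
  · ring

end Sign

section Transvection

/-- The group of form-preserving permutations; for a nondegenerate form these are automatically
linear. -/
def isometryGroup (B : LinearMap.BilinForm (ZMod 2) V) : Subgroup (Equiv.Perm V) where
  carrier := {π | ∀ a b, B (π a) (π b) = B a b}
  one_mem' _ _ := rfl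
  mul_mem' hπ hρ a b := (hπ _ _).trans (hρ a b)
  inv_mem' {π} hπ a b := by
    rw [← hπ, Equiv.Perm.inv_def, π.apply_symm_apply, π.apply_symm_apply]

theorem apply_zero_of_mem_isometryGroup (hnd : B.SeparatingLeft) {π : Equiv.Perm V}
    (hπ : π ∈ isometryGroup B) : π 0 = 0 := by
  refine hnd _ fun b => ?_
  rw [← π.apply_symm_apply b, hπ, map_zero, LinearMap.zero_apply]

/-- The transvection `x ↦ x + B c x • c`, as a permutation. -/
def symplecticTransvection (hB : B.IsAlt) (c : V) : Equiv.Perm V :=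
  (LinearEquiv.transvection (hB c)).toEquiv

theorem symplecticTransvection_apply (hB : B.IsAlt) (c x : V) :
    symplecticTransvection hB c x = x + B c x • c :=
  rfl

theorem symplecticTransvection_of_eq_zero (hB : B.IsAlt) {c x : V} (h : B c x = 0) :
    symplecticTransvection hB c x = x := by
  rw [symplecticTransvection_apply, h, zero_smul, add_zero]

theorem symplecticTransvection_of_ne_zero (hB : B.IsAlt) {c x : V} (h : B c x ≠ 0) :
    symplecticTransvection hB c x = x + c := by
  rw [symplecticTransvection_apply, eq_one_of_ne_zero h, one_smul]

/-- The group generated by the symplectic transvections. -/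
def transvectionGroup (hB : B.IsAlt) : Subgroup (Equiv.Perm V) :=
  Subgroup.closure (Set.range (symplecticTransvection hB))

theorem symplecticTransvection_mem (hB : B.IsAlt) (c : V) :
    symplecticTransvection hB c ∈ transvectionGroup hB :=
  Subgroup.subset_closure ⟨c, rfl⟩

theorem transvectionGroup_le_isometryGroup (hB : B.IsAlt) :
    transvectionGroup hB ≤ isometryGroup B := by
  refine (Subgroup.closure_le _).mpr ?_
  rintro _ ⟨c, rfl⟩ a b
  have h2 : B c a * B c b + B c a * B c b = 0 := ZModModule.add_self _
  simp only [symplecticTransvection_apply, map_add, map_smul, LinearMap.add_apply,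
    LinearMap.smul_apply, smul_eq_mul, hB c, form_comm hB a c, mul_zero, add_zero]
  linear_combination h2

theorem sum_symplecticChar_triple_ne_zero [Fintype V] (hB : B.IsAlt) (hnd : B.SeparatingLeft)
    {t b b' : V} (hb : b ≠ 0) (hbt : t + b ≠ 0) (hb' : b' ≠ 0) (hbt' : t + b' ≠ 0) {s : ℂ}
    (hs : t = 0 ∨ t + (b + b') = 0 → s = 1) :
    ∑ c, (1 + s * symplecticChar B t c) * (1 - symplecticChar B b c) *
      (1 - symplecticChar B b' c) ≠ 0 := by
  classical
  have hexpand : ∀ c, (1 + s * symplecticChar B t c) * (1 - symplecticChar B b c) *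
      (1 - symplecticChar B b' c) = symplecticChar B 0 c - symplecticChar B b c -
        symplecticChar B b' c + symplecticChar B (b + b') c + s * (symplecticChar B t c -
        symplecticChar B (t + b) c - symplecticChar B (t + b') c +
        symplecticChar B (t + (b + b')) c) := fun c => by
    simp only [symplecticChar_add_left hB, symplecticChar_zero, AddChar.one_apply]
    ring
  simp only [hexpand, Finset.sum_add_distrib, Finset.sum_sub_distrib, ← Finset.mul_sum,
    sum_symplecticChar hnd, if_neg hb, if_neg hb', if_neg hbt, if_neg hbt', if_true]
  have hcard : (Fintype.card V : ℂ) ≠ 0 := Nat.cast_ne_zero.mpr Fintype.card_ne_zero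
  split_ifs <;> grind

theorem exists_form_eq_and_ne_zero [Finite V] (hB : B.IsAlt) (hnd : B.SeparatingLeft) {t b b' : V}
    (hb : b ≠ 0) (hbt : b ≠ t) (hb' : b' ≠ 0) (hbt' : b' ≠ t) (ht : B b t = B b' t)
    (hbb' : B b b' = 0) : ∃ c, B t c = B b t ∧ B b c ≠ 0 ∧ B b' c ≠ 0 := by
  have := Fintype.ofFinite V
  by_contra! hnone
  have hne : ∀ {u v : V}, u ≠ v → v + u ≠ 0 := fun h h0 =>
    h (by rwa [add_eq_zero_iff_eq_neg, ZModModule.neg_eq_self, eq_comm] at h0)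
  have hs : t = 0 ∨ t + (b + b') = 0 → symplecticChar B b t = 1 := by
    rw [symplecticChar_eq_one_iff]
    rintro (rfl | h)
    · exact map_zero _
    · rw [add_eq_zero_iff_eq_neg, ZModModule.neg_eq_self] at h
      rw [h, map_add, hB, hbb', add_zero]
  refine sum_symplecticChar_triple_ne_zero hB hnd hb (hne hbt) hb' (hne hbt') hs
    (Finset.sum_eq_zero fun c _ => ?_)
  by_cases htc : B t c = B b t
  · by_cases hbc : B b c = 0
    · rw [(symplecticChar_eq_one_iff b c).mpr hbc, sub_self, mul_zero, zero_mul]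
    · rw [(symplecticChar_eq_one_iff b' c).mpr (hnone c htc hbc), sub_self, mul_zero]
  · rw [symplecticChar_eq_neg_of_ne htc, mul_neg, symplecticChar_mul_self, add_neg_cancel,
      zero_mul, zero_mul]

/-- Witt's extension theorem for two vectors over `ZMod 2`, realised inside the group generated by
transvections. -/
theorem exists_mem_transvectionGroup_apply_eq [Finite V] (hB : B.IsAlt) (hnd : B.SeparatingLeft)
    {t b b' : V} (hb : b ≠ 0) (hbt : b ≠ t) (hb' : b' ≠ 0) (hbt' : b' ≠ t)
    (ht : B b t = B b' t) : ∃ π ∈ transvectionGroup hB, π t = t ∧ π b = b' := by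
  have hdirect : ∀ {x y : V}, B x y ≠ 0 → B x t = B y t →
      symplecticTransvection hB (x + y) t = t ∧ symplecticTransvection hB (x + y) x = y := by
    intro x y hxy hxt
    constructor
    · exact symplecticTransvection_of_eq_zero hB (by
        rw [map_add, LinearMap.add_apply, hxt, ZModModule.add_self])
    · rw [symplecticTransvection_of_ne_zero hB, ← add_assoc, ZModModule.add_self, zero_add]
      rwa [map_add, LinearMap.add_apply, hB, zero_add, form_comm hB]
  by_cases hbb' : B b b' = 0
  · obtain ⟨c, hct, hbc, hb'c⟩ := exists_form_eq_and_ne_zero hB hnd hb hbt hb' hbt' ht hbb'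
    rw [form_comm hB t c] at hct
    obtain ⟨ht₁, hbc⟩ := hdirect hbc hct.symm
    obtain ⟨ht₂, hcb'⟩ := hdirect (form_comm hB b' c ▸ hb'c) (hct.trans ht)
    refine ⟨_, mul_mem (symplecticTransvection_mem hB (c + b'))
      (symplecticTransvection_mem hB (b + c)), ?_, ?_⟩
    · rw [Equiv.Perm.mul_apply, ht₁, ht₂]
    · rw [Equiv.Perm.mul_apply, hbc, hcb']
  · exact ⟨_, symplecticTransvection_mem hB (b + b'), hdirect hbb' ht⟩

theorem exists_mem_transvectionGroup_apply_eq_of_ne_zero [Finite V] (hB : B.IsAlt)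
    (hnd : B.SeparatingLeft) {b b' : V} (hb : b ≠ 0) (hb' : b' ≠ 0) :
    ∃ π ∈ transvectionGroup hB, π b = b' := by
  obtain ⟨π, hπ, -, h⟩ := exists_mem_transvectionGroup_apply_eq hB hnd hb hb hb' hb'
    ((map_zero (B b)).trans (map_zero (B b')).symm)
  exact ⟨π, hπ, h⟩

end Transvection

end SymplecticSpace

section Involution

variable {K M : Type*} [Field K] [NeZero (2 : K)] [AddCommGroup M] [Module K M]
  {F : Module.End K M} {μ : K}

theorem isProj_eigenspace_of_mul_self_eq (hμ : μ ≠ 0) (hF : F * F = μ ^ 2 • 1) :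
    LinearMap.IsProj (F.eigenspace μ) ((2 * μ)⁻¹ • (F + μ • 1)) where
  map_mem x := by
    have hFx : F (F x) = μ ^ 2 • x := congr($hF x)
    rw [Module.End.mem_eigenspace_iff]
    simp only [LinearMap.smul_apply, LinearMap.add_apply, Module.End.one_apply, map_smul, map_add,
      hFx]
    module
  map_id x hx := by
    have hFx : F x = μ • x := Module.End.mem_eigenspace_iff.mp hx
    have h2 : (2 : K) ≠ 0 := NeZero.ne 2
    rw [LinearMap.smul_apply, LinearMap.add_apply, LinearMap.smul_apply, Module.End.one_apply, hFx,
      ← add_smul, smul_smul, ← two_mul, inv_mul_cancel₀ (mul_ne_zero h2 hμ), one_smul]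

theorem two_mul_finrank_eigenspace [FiniteDimensional K M] (hμ : μ ≠ 0)
    (hF : F * F = μ ^ 2 • 1) :
    2 * μ * Module.finrank K (F.eigenspace μ) =
      LinearMap.trace K M F + μ * Module.finrank K M := by
  have h2 : (2 : K) ≠ 0 := NeZero.ne 2
  rw [← (isProj_eigenspace_of_mul_self_eq hμ hF).trace, map_smul, map_add, map_smul,
    LinearMap.trace_one, smul_eq_mul, smul_eq_mul, mul_inv_cancel_left₀ (mul_ne_zero h2 hμ)]

end Involution

section Indicator

variable {V : Type*} [Zero V] [DecidableEq V]

/-- The indicator function of the nonzero vectors. -/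
def indicatorNeZero (V : Type*) [Zero V] [DecidableEq V] : EuclideanSpace ℂ V :=
  WithLp.toLp 2 fun a => if a = 0 then 0 else 1

theorem indicatorNeZero_apply (a : V) : indicatorNeZero V a = 1 - if a = 0 then 1 else 0 := by
  change (if a = 0 then (0 : ℂ) else 1) = _
  split_ifs <;> norm_num

variable [Fintype V]

theorem permute_indicatorNeZero {π : Equiv.Perm V} (hπ : π 0 = 0) :
    permute ℂ π (indicatorNeZero V) = indicatorNeZero V := by
  ext a
  obtain ⟨a, rfl⟩ := π.surjective a
  rw [permute_apply_apply]
  have hzero : π a = 0 ↔ a = 0 := by rw [← π.apply_eq_iff_eq (x := a), hπ]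
  simp only [indicatorNeZero_apply, hzero]

theorem sum_indicatorNeZero : ∑ a, indicatorNeZero V a = (Fintype.card V : ℂ) - 1 := by
  simp [indicatorNeZero_apply]

theorem inner_indicatorNeZero (l : EuclideanSpace ℂ V) :
    inner ℂ (indicatorNeZero V) l = ∑ a, l a - l 0 := by
  simp [PiLp.inner_apply, indicatorNeZero_apply, mul_sub]

end Indicator

section Fourier

theorem ne_zero_of_sq_eq_card {V : Type*} [Fintype V] [Nonempty V] {μ : ℂ}
    (hμ : μ ^ 2 = Fintype.card V) : μ ≠ 0 := by
  rintro rfl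
  rw [zero_pow two_ne_zero, eq_comm, Nat.cast_eq_zero] at hμ
  exact Fintype.card_ne_zero hμ

variable {V : Type*} [AddCommGroup V] [Module (ZMod 2) V] [Fintype V] [DecidableEq V]
  {B : LinearMap.BilinForm (ZMod 2) V}

/-- The Fourier transform of functions on a symplectic `ZMod 2`-space, where the form identifies
the space with its dual. -/
def symplecticFourier (B : LinearMap.BilinForm (ZMod 2) V) : Module.End ℂ (EuclideanSpace ℂ V) :=
  Matrix.toEuclideanLin (Matrix.of fun a b => symplecticChar B a b)

theorem symplecticFourier_apply (l : EuclideanSpace ℂ V) (a : V) :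
    symplecticFourier B l a = ∑ b, symplecticChar B a b * l b :=
  rfl

theorem symplecticFourier_apply_zero (l : EuclideanSpace ℂ V) :
    symplecticFourier B l 0 = ∑ b, l b := by
  simp only [symplecticFourier_apply, symplecticChar_zero, AddChar.one_apply, one_mul]

theorem symplecticFourier_mul_self (hB : B.IsAlt) (hnd : B.SeparatingLeft) :
    symplecticFourier B * symplecticFourier B = (Fintype.card V : ℂ) • 1 := by
  ext l a
  have hterm : ∀ b, symplecticChar B a b * ∑ c, symplecticChar B b c * l c =
      ∑ c, symplecticChar B (a + c) b * l c := fun b => by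
    rw [Finset.mul_sum]
    refine Finset.sum_congr rfl fun c _ => ?_
    rw [symplecticChar_add_left hB, symplecticChar_comm hB c, mul_assoc]
  have hzero : ∀ c, a + c = 0 ↔ a = c := fun c => by
    rw [add_eq_zero_iff_eq_neg, ZModModule.neg_eq_self]
  rw [Module.End.mul_apply, symplecticFourier_apply]
  simp only [symplecticFourier_apply, hterm]
  rw [Finset.sum_comm]
  simp only [← Finset.sum_mul, sum_symplecticChar hnd, hzero, ite_mul, zero_mul,
    Finset.sum_ite_eq, Finset.mem_univ, if_true]
  rfl

theorem trace_symplecticFourier (hB : B.IsAlt) :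
    LinearMap.trace ℂ _ (symplecticFourier B) = Fintype.card V := by
  rw [symplecticFourier, Matrix.toEuclideanLin, Matrix.toLpLin_eq_toLin, Matrix.trace_toLin_eq,
    Matrix.trace]
  simp [symplecticChar_apply, hB _]

theorem isSymmetric_symplecticFourier (hB : B.IsAlt) : (symplecticFourier B).IsSymmetric := by
  refine Matrix.isSymmetric_toEuclideanLin_iff.mpr (Matrix.IsHermitian.ext fun a b => ?_)
  rw [Matrix.of_apply, Matrix.of_apply, symplecticChar_comm hB, symplecticChar_apply]
  split_ifs <;> simp

theorem symplecticFourier_permute {π : Equiv.Perm V} (hπ : π ∈ isometryGroup B)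
    (l : EuclideanSpace ℂ V) :
    symplecticFourier B (permute ℂ π l) = permute ℂ π (symplecticFourier B l) := by
  ext a
  obtain ⟨a, rfl⟩ := π.surjective a
  rw [permute_apply_apply, symplecticFourier_apply, symplecticFourier_apply, ← Equiv.sum_comp π]
  refine Finset.sum_congr rfl fun b _ => ?_
  rw [permute_apply_apply, symplecticChar_apply, hπ, ← symplecticChar_apply]

/-- The functions with `l 0 = 0` in the `μ`-eigenspace of the symplectic Fourier transform. -/
def puncturedEigenspace (B : LinearMap.BilinForm (ZMod 2) V) (μ : ℂ) :
    Submodule ℂ (EuclideanSpace ℂ V) :=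
  (symplecticFourier B).eigenspace μ ⊓ vanishingAt 0

theorem mem_puncturedEigenspace_iff {μ : ℂ} {l : EuclideanSpace ℂ V} :
    l ∈ puncturedEigenspace B μ ↔ (∀ a, ∑ b, symplecticChar B a b * l b = μ * l a) ∧ l 0 = 0 := by
  rw [puncturedEigenspace, Submodule.mem_inf, Module.End.mem_eigenspace_iff, mem_vanishingAt_iff,
    PiLp.ext_iff]
  rfl

theorem sum_eq_zero_of_mem_puncturedEigenspace {μ : ℂ} {l : EuclideanSpace ℂ V}
    (hl : l ∈ puncturedEigenspace B μ) : ∑ a, l a = 0 := by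
  rw [← symplecticFourier_apply_zero (B := B), symplecticFourier_apply,
    (mem_puncturedEigenspace_iff.mp hl).1, mem_vanishingAt_iff.mp hl.2, mul_zero]

theorem mem_puncturedEigenspace_iff_sum_filter {μ : ℂ} {l : EuclideanSpace ℂ V} :
    l ∈ puncturedEigenspace B μ ↔
      l 0 = 0 ∧ ∑ b, l b = 0 ∧ ∀ a ≠ 0, ∑ b with B a b ≠ 0, l b = -(μ / 2) * l a := by
  constructor
  · intro hl
    have hsum := sum_eq_zero_of_mem_puncturedEigenspace hl
    obtain ⟨heig, hl0⟩ := mem_puncturedEigenspace_iff.mp hl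
    refine ⟨hl0, hsum, fun a _ => ?_⟩
    linear_combination (-1 / 2 : ℂ) * (sum_symplecticChar_mul a l).symm.trans (heig a) + hsum / 2
  · rintro ⟨hl0, hsum, hfilter⟩
    refine mem_puncturedEigenspace_iff.mpr ⟨fun a => ?_, hl0⟩
    rcases eq_or_ne a 0 with rfl | ha
    · simp only [symplecticChar_apply, map_zero, LinearMap.zero_apply, if_true, one_mul, hsum, hl0,
        mul_zero]
    · rw [sum_symplecticChar_mul, hsum, hfilter a ha]
      ring

theorem isometryGroup_le_permStabilizer_puncturedEigenspace (hnd : B.SeparatingLeft) (μ : ℂ) :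
    isometryGroup B ≤ permStabilizer (puncturedEigenspace B μ) := fun π hπ =>
  mem_permStabilizer_iff.mpr fun l hl => by
    refine ⟨Module.End.mem_eigenspace_iff.mpr ?_, mem_vanishingAt_iff.mpr ?_⟩
    · rw [symplecticFourier_permute hπ, Module.End.mem_eigenspace_iff.mp hl.1, map_smul]
    · rw [← apply_zero_of_mem_isometryGroup hnd hπ, permute_apply_apply,
        mem_vanishingAt_iff.mp hl.2]

/-- The stabilizer of `t` has only three orbits besides `{0}`: the point `t` and the two level sets
of `B t`. Since `l` and its Fourier transform vanish at `0` and at `t`, the sum of `l` over each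
level set is zero. -/
theorem eq_zero_of_mem_puncturedEigenspace_of_permute_eq (hB : B.IsAlt) (hnd : B.SeparatingLeft)
    {μ : ℂ} {l : EuclideanSpace ℂ V} (hl : l ∈ puncturedEigenspace B μ) {t : V}
    (hfix : ∀ π ∈ transvectionGroup hB, π t = t → permute ℂ π l = l) (hlt : l t = 0) : l = 0 := by
  ext x
  by_cases hx : x = 0 ∨ x = t
  · rcases hx with rfl | rfl
    exacts [hl.2, hlt]
  obtain ⟨hx0, hxt⟩ := not_or.mp hx
  set S : Finset V := {c | c ≠ 0 ∧ c ≠ t ∧ B t c = B t x}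
  have hterm : ∀ c, l c + symplecticChar B t x * (symplecticChar B t c * l c) =
      if c ∈ S then 2 * l x else 0 := fun c => by
    split_ifs with hc
    · obtain ⟨hc0, hct, hBc⟩ := (Finset.mem_filter.mp hc).2
      obtain ⟨π, hπ, hπt, rfl⟩ := exists_mem_transvectionGroup_apply_eq hB hnd hx0 hxt hc0 hct
        (by rw [form_comm hB, ← hBc, form_comm hB])
      have hlπ : l (π x) = l x := by
        conv_lhs => rw [← hfix π hπ hπt, permute_apply_apply]
      rw [symplecticChar_apply t (π x), hBc, ← symplecticChar_apply, ← mul_assoc,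
        symplecticChar_mul_self, hlπ, one_mul, two_mul]
    · by_cases hBc : B t c = B t x
      · have hc' : c = 0 ∨ c = t := by
          by_contra! h
          exact hc (Finset.mem_filter.mpr ⟨Finset.mem_univ c, h.1, h.2, hBc⟩)
        have hlc : l c = 0 := by
          rcases hc' with rfl | rfl
          exacts [hl.2, hlt]
        rw [hlc, mul_zero, mul_zero, add_zero]
      · rw [symplecticChar_eq_neg_of_ne hBc, neg_mul, mul_neg, ← mul_assoc,
          symplecticChar_mul_self, one_mul, add_neg_cancel]
  have hsum := Finset.sum_congr rfl fun c (_ : c ∈ Finset.univ) => hterm c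
  rw [Finset.sum_add_distrib, ← Finset.mul_sum, (mem_puncturedEigenspace_iff.mp hl).1, hlt,
    sum_eq_zero_of_mem_puncturedEigenspace hl, Finset.sum_ite_mem, Finset.univ_inter,
    Finset.sum_const, nsmul_eq_mul, mul_zero, mul_zero, add_zero, eq_comm, mul_eq_zero,
    mul_eq_zero, Nat.cast_eq_zero] at hsum
  have hxS : x ∈ S := Finset.mem_filter.mpr ⟨Finset.mem_univ x, hx0, hxt, rfl⟩
  simpa [Finset.card_ne_zero_of_mem hxS] using hsum

theorem eq_bot_or_eq_puncturedEigenspace (hB : B.IsAlt) (hnd : B.SeparatingLeft) {μ : ℂ}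
    {W : Submodule ℂ (EuclideanSpace ℂ V)} (hW : W ≤ puncturedEigenspace B μ)
    (hGW : transvectionGroup hB ≤ permStabilizer W) : W = ⊥ ∨ W = puncturedEigenspace B μ := by
  rcases subsingleton_or_nontrivial V with hV | hV
  · left
    refine (Submodule.eq_bot_iff W).mpr fun l hl => PiLp.ext fun x => ?_
    rw [Subsingleton.elim x 0]
    exact (hW hl).2
  · obtain ⟨t, ht⟩ := exists_ne (0 : V)
    refine eq_bot_or_eq_of_zonal (t := t) hW hGW ((transvectionGroup_le_isometryGroup hB).trans
      (isometryGroup_le_permStabilizer_puncturedEigenspace hnd μ)) (fun l hl x hx => ?_)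
      (fun l hl => eq_zero_of_mem_puncturedEigenspace_of_permute_eq hB hnd hl)
    exact exists_mem_transvectionGroup_apply_eq_of_ne_zero hB hnd ht fun h0 => hx (h0 ▸ hl.2)

theorem smul_add_symplecticFourier_mem_eigenspace (hB : B.IsAlt) (hnd : B.SeparatingLeft) {μ : ℂ}
    (hμ : μ ^ 2 = Fintype.card V) (l : EuclideanSpace ℂ V) :
    μ • l + symplecticFourier B l ∈ (symplecticFourier B).eigenspace μ := by
  have hFF : symplecticFourier B (symplecticFourier B l) = μ ^ 2 • l :=
    hμ ▸ congr($(symplecticFourier_mul_self hB hnd) l)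
  rw [Module.End.mem_eigenspace_iff, map_add, map_smul, hFF]
  module

theorem finrank_puncturedEigenspace_add_one (hB : B.IsAlt) (hnd : B.SeparatingLeft) {μ : ℂ}
    (hμ : μ ^ 2 = Fintype.card V) (hμ1 : μ ≠ -1) :
    Module.finrank ℂ (puncturedEigenspace B μ) + 1 =
      Module.finrank ℂ ((symplecticFourier B).eigenspace μ) := by
  set eval : (symplecticFourier B).eigenspace μ →ₗ[ℂ] ℂ :=
    (PiLp.projₗ 2 (fun _ : V => ℂ) 0) ∘ₗ Submodule.subtype _
  set u : EuclideanSpace ℂ V := EuclideanSpace.single 0 1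
  have hu := smul_add_symplecticFourier_mem_eigenspace hB hnd hμ u
  have hu0 : (μ • u + symplecticFourier B u) 0 = μ + 1 := by
    simp [u, symplecticFourier_apply_zero]
  have hsurj : Function.Surjective eval :=
    LinearMap.surjective fun h0 => hμ1 (eq_neg_of_add_eq_zero_left
      (hu0.symm.trans congr($h0 ⟨_, hu⟩)))
  have hker : (LinearMap.ker eval).map (Submodule.subtype _) = puncturedEigenspace B μ := by
    rw [LinearMap.ker_comp, Submodule.map_comap_subtype]
    rfl
  rw [← LinearMap.finrank_range_add_finrank_ker eval, LinearMap.range_eq_top.mpr hsurj,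
    finrank_top, Module.finrank_self, ← hker,
    LinearEquiv.finrank_eq (Submodule.equivSubtypeMap _ _), add_comm]

theorem two_mul_finrank_puncturedEigenspace (hB : B.IsAlt) (hnd : B.SeparatingLeft) {μ : ℂ}
    (hμ : μ ^ 2 = Fintype.card V) (hμ1 : μ ≠ -1) :
    2 * (Module.finrank ℂ (puncturedEigenspace B μ) : ℂ) = μ ^ 2 + μ - 2 := by
  have hμ0 : μ ≠ 0 := ne_zero_of_sq_eq_card hμ
  have hE := two_mul_finrank_eigenspace hμ0 (hμ ▸ symplecticFourier_mul_self hB hnd)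
  rw [trace_symplecticFourier hB, finrank_euclideanSpace, ← hμ,
    ← finrank_puncturedEigenspace_add_one hB hnd hμ hμ1, Nat.cast_add, Nat.cast_one] at hE
  apply mul_left_cancel₀ hμ0
  linear_combination hE

theorem isometryGroup_le_permStabilizer_span_indicatorNeZero (hnd : B.SeparatingLeft) :
    isometryGroup B ≤ permStabilizer (ℂ ∙ indicatorNeZero V) := fun π hπ =>
  mem_permStabilizer_iff.mpr fun l hl => by
    obtain ⟨c, rfl⟩ := Submodule.mem_span_singleton.mp hl
    rw [map_smul, permute_indicatorNeZero (apply_zero_of_mem_isometryGroup hnd hπ)]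
    exact hl

theorem isOrtho_span_indicatorNeZero_puncturedEigenspace (μ : ℂ) :
    (ℂ ∙ indicatorNeZero V) ⟂ puncturedEigenspace B μ := by
  rw [Submodule.isOrtho_iff_inner_eq]
  intro u hu l hl
  obtain ⟨c, rfl⟩ := Submodule.mem_span_singleton.mp hu
  rw [inner_smul_left, inner_indicatorNeZero, sum_eq_zero_of_mem_puncturedEigenspace hl,
    mem_vanishingAt_iff.mp hl.2, sub_zero, mul_zero]

theorem isOrtho_puncturedEigenspace (hB : B.IsAlt) {μ ν : ℂ} (hμν : μ ≠ ν) :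
    puncturedEigenspace B μ ⟂ puncturedEigenspace B ν :=
  Submodule.IsOrtho.mono inf_le_left inf_le_left
    ((isSymmetric_symplecticFourier hB).orthogonalFamily_eigenspaces.isOrtho hμν)

theorem smul_add_symplecticFourier_mem_puncturedEigenspace (hB : B.IsAlt)
    (hnd : B.SeparatingLeft) {μ : ℂ} (hμ : μ ^ 2 = Fintype.card V) {l : EuclideanSpace ℂ V}
    (hl0 : l 0 = 0) (hl : ∑ a, l a = 0) :
    μ • l + symplecticFourier B l ∈ puncturedEigenspace B μ := by
  refine ⟨smul_add_symplecticFourier_mem_eigenspace hB hnd hμ l, mem_vanishingAt_iff.mpr ?_⟩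
  rw [PiLp.add_apply, PiLp.smul_apply, hl0, symplecticFourier_apply_zero, hl,
    smul_zero, add_zero]

theorem span_indicatorNeZero_sup_puncturedEigenspaces (hB : B.IsAlt) (hnd : B.SeparatingLeft)
    [Nontrivial V] {μ : ℂ} (hμ : μ ^ 2 = Fintype.card V) :
    (ℂ ∙ indicatorNeZero V) ⊔ puncturedEigenspace B μ ⊔ puncturedEigenspace B (-μ) =
      vanishingAt 0 := by
  refine le_antisymm (sup_le (sup_le ?_ inf_le_right) inf_le_right) fun l hl => ?_
  · exact (Submodule.span_singleton_le_iff_mem _ _).mpr (if_pos rfl)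
  have hμ0 : μ ≠ 0 := ne_zero_of_sq_eq_card hμ
  have hcard : (Fintype.card V : ℂ) - 1 ≠ 0 :=
    sub_ne_zero.mpr (Nat.cast_ne_one.mpr Fintype.one_lt_card.ne')
  set c : ℂ := (∑ a, l a) / (Fintype.card V - 1)
  set m : EuclideanSpace ℂ V := l - c • indicatorNeZero V
  have hm0 : m 0 = 0 := by
    rw [PiLp.sub_apply, PiLp.smul_apply, mem_vanishingAt_iff.mp hl, indicatorNeZero_apply,
      if_pos rfl, sub_self, smul_zero, sub_zero]
  have hm : ∑ a, m a = 0 := by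
    simp only [m, PiLp.sub_apply, PiLp.smul_apply, smul_eq_mul, Finset.sum_sub_distrib,
      ← Finset.mul_sum, sum_indicatorNeZero]
    rw [div_mul_cancel₀ _ hcard, sub_self]
  have hl_eq : l = c • indicatorNeZero V + (2 * μ)⁻¹ • (μ • m + symplecticFourier B m) +
      -(2 * μ)⁻¹ • (-μ • m + symplecticFourier B m) := by
    have hlm : l = c • indicatorNeZero V + m := (add_sub_cancel _ _).symm
    clear_value m
    rw [hlm]
    match_scalars <;> field_simp <;> ring
  rw [hl_eq]
  refine Submodule.add_mem_sup (Submodule.add_mem_sup ?_ ?_) ?_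
  · exact Submodule.smul_mem _ _ (Submodule.mem_span_singleton_self _)
  · exact Submodule.smul_mem _ _
      (smul_add_symplecticFourier_mem_puncturedEigenspace hB hnd hμ hm0 hm)
  · exact Submodule.smul_mem _ _
      (smul_add_symplecticFourier_mem_puncturedEigenspace hB hnd ((neg_sq μ).trans hμ) hm0 hm)

end Fourier

section PiKronecker

variable {ι l m n R : Type*} [Fintype ι] [CommSemiring R]

/-- The Kronecker product of a finite family of matrices. -/
def piKronecker (A : ι → Matrix m n R) : Matrix (ι → m) (ι → n) R :=
  Matrix.of fun x y => ∏ i, A i (x i) (y i)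

theorem piKronecker_mul_piKronecker [Fintype m] [DecidableEq ι] (A : ι → Matrix l m R)
    (B : ι → Matrix m n R) :
    piKronecker A * piKronecker B = piKronecker fun i => A i * B i := by
  ext x y
  simp only [piKronecker, Matrix.mul_apply, Matrix.of_apply, ← Finset.prod_mul_distrib,
    Finset.prod_univ_sum, Fintype.piFinset_univ]

theorem piKronecker_smul (c : ι → R) (A : ι → Matrix m n R) :
    piKronecker (fun i => c i • A i) = (∏ i, c i) • piKronecker A := by
  ext x y
  exact Finset.prod_mul_distrib

theorem piKronecker_one [DecidableEq m] :
    piKronecker (fun _ : ι => (1 : Matrix m m R)) = 1 := by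
  ext x y
  simp only [piKronecker, Matrix.of_apply, Matrix.one_apply, Finset.prod_ite_zero,
    Finset.prod_const_one, Finset.mem_univ, true_imp_iff, funext_iff]

theorem conjTranspose_piKronecker [StarRing R] (A : ι → Matrix m n R) :
    (piKronecker A)ᴴ = piKronecker fun i => (A i)ᴴ := by
  ext x y
  exact star_prod _ _

theorem trace_piKronecker [Fintype m] [DecidableEq ι] (A : ι → Matrix m m R) :
    (piKronecker A).trace = ∏ i, (A i).trace := by
  simp only [Matrix.trace, Matrix.diag, piKronecker, Matrix.of_apply, Finset.prod_univ_sum,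
    Fintype.piFinset_univ]

end PiKronecker

section QuarterTurn

variable {n : Type*} [Fintype n] [DecidableEq n] {P M : Matrix n n ℂ}

/-- The unitary `exp (i π P / 4)` of a Hermitian involution `P`. -/
def quarterTurn (P : Matrix n n ℂ) : Matrix n n ℂ :=
  (Real.sqrt 2 : ℂ)⁻¹ • (1 + Complex.I • P)

theorem quarterTurn_mul_mul_conjTranspose (hP : P.IsHermitian) (M : Matrix n n ℂ) :
    quarterTurn P * M * (quarterTurn P)ᴴ =
      (2 : ℂ)⁻¹ • (M + P * M * P + Complex.I • (P * M - M * P)) := by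
  have hsqrt : (Real.sqrt 2 : ℂ)⁻¹ * (Real.sqrt 2 : ℂ)⁻¹ = 2⁻¹ := by
    rw [← mul_inv, ← Complex.ofReal_mul, Real.mul_self_sqrt zero_le_two, Complex.ofReal_ofNat]
  have hstar : (quarterTurn P)ᴴ = (Real.sqrt 2 : ℂ)⁻¹ • (1 - Complex.I • P) := by
    simp [quarterTurn, Matrix.conjTranspose_smul, hP.eq, sub_eq_add_neg]
  rw [hstar, quarterTurn, Matrix.smul_mul, Matrix.smul_mul, Matrix.mul_smul, smul_smul, hsqrt]
  simp only [Matrix.add_mul, Matrix.mul_sub, Matrix.one_mul, Matrix.mul_one, Matrix.smul_mul,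
    Matrix.mul_smul, smul_add, smul_sub, smul_smul, mul_assoc, Complex.I_mul_I]
  module

theorem quarterTurn_mul_mul_conjTranspose_of_commute (hP : P.IsHermitian) (hPP : P * P = 1)
    (hPM : P * M = M * P) : quarterTurn P * M * (quarterTurn P)ᴴ = M := by
  rw [quarterTurn_mul_mul_conjTranspose hP, hPM, Matrix.mul_assoc, hPP, Matrix.mul_one]
  module

theorem quarterTurn_mul_mul_conjTranspose_of_anticommute (hP : P.IsHermitian) (hPP : P * P = 1)
    (hPM : P * M = -(M * P)) :
    quarterTurn P * M * (quarterTurn P)ᴴ = Complex.I • (P * M) := by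
  rw [quarterTurn_mul_mul_conjTranspose hP, hPM, Matrix.neg_mul, Matrix.mul_assoc, hPP,
    Matrix.mul_one]
  module

theorem quarterTurn_mem_unitaryGroup (hP : P.IsHermitian) (hPP : P * P = 1) :
    quarterTurn P ∈ Matrix.unitaryGroup n ℂ := by
  have h := quarterTurn_mul_mul_conjTranspose_of_commute hP hPP
    ((Matrix.mul_one P).trans (Matrix.one_mul P).symm)
  rw [Matrix.mul_one] at h
  exact Matrix.mem_unitaryGroup_iff.mpr h

end QuarterTurn

section PhaseSpace

/-- The phase space of `q` qubits, which labels the Pauli operators up to sign. -/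
abbrev PhaseSpace (q : ℕ) := Fin q → ZMod 2 × ZMod 2

/-- The symplectic form on the phase space of one qubit. -/
def qubitForm : LinearMap.BilinForm (ZMod 2) (ZMod 2 × ZMod 2) :=
  LinearMap.mk₂ (ZMod 2) (fun a b => a.1 * b.2 + a.2 * b.1) (by decide) (by decide) (by decide)
    (by decide)

theorem isAlt_qubitForm : qubitForm.IsAlt := fun a => by
  revert a
  decide

theorem separatingLeft_qubitForm : qubitForm.SeparatingLeft := fun a h =>
  Prod.ext_iff.mpr ⟨by simpa [qubitForm] using h (0, 1), by simpa [qubitForm] using h (1, 0)⟩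

/-- The symplectic form on the phase space of `q` qubits. -/
def symplecticForm (q : ℕ) : LinearMap.BilinForm (ZMod 2) (PhaseSpace q) :=
  ∑ i, qubitForm.compl₁₂ (LinearMap.proj i) (LinearMap.proj i)

variable {q : ℕ}

theorem symplecticForm_apply (a b : PhaseSpace q) :
    symplecticForm q a b = ∑ i, qubitForm (a i) (b i) := by
  simp only [symplecticForm, LinearMap.sum_apply, LinearMap.compl₁₂_apply, LinearMap.proj_apply]

theorem isAlt_symplecticForm : (symplecticForm q).IsAlt := fun a => by
  simp only [symplecticForm_apply, isAlt_qubitForm _, Finset.sum_const_zero]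

theorem separatingLeft_symplecticForm : (symplecticForm q).SeparatingLeft := fun a h =>
  funext fun i => separatingLeft_qubitForm _ fun z => by
    rw [← h (Pi.single i z), symplecticForm_apply, Finset.sum_eq_single i, Pi.single_eq_same]
    · intro j _ hj
      rw [Pi.single_eq_of_ne hj, map_zero]
    · exact fun hi => absurd (Finset.mem_univ i) hi

theorem symplecticChar_symplecticForm (a b : PhaseSpace q) :
    symplecticChar (symplecticForm q) a b = ∏ i, symplecticChar qubitForm (a i) (b i) := by
  change AddChar.zmodChar 2 (neg_one_sq (R := ℂ)) (symplecticForm q a b) = _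
  rw [symplecticForm_apply]
  exact map_prod (AddChar.zmodChar 2 (neg_one_sq (R := ℂ))).toMonoidHom
    (fun i => Multiplicative.ofAdd (qubitForm (a i) (b i))) _

theorem two_pow_sq_eq_card_phaseSpace : ((2 : ℂ) ^ q) ^ 2 = Fintype.card (PhaseSpace q) := by
  rw [Fintype.card_pi_const, Fintype.card_prod, ZMod.card, ← sq, Nat.cast_pow, Nat.cast_pow,
    Nat.cast_ofNat, pow_right_comm]

end PhaseSpace

section Pauli

/-- Numbers the points of the phase space of one qubit like the matrices `1, X, Y, Z`. Any
bijection preserving `0` would do, since it is an isomorphism of Klein four-groups. -/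
def pauliLabel : ZMod 2 × ZMod 2 ≃ Fin 4 :=
  finProdFinEquiv

theorem isHermitian_pauli1 (j : Fin 4) : (pauli1 j).IsHermitian := by
  fin_cases j <;> ext x y <;> fin_cases x <;> fin_cases y <;> simp [pauli1]

theorem pauli1_mul_self (j : Fin 4) : pauli1 j * pauli1 j = 1 := by
  fin_cases j <;> ext x y <;> fin_cases x <;> fin_cases y <;> simp [pauli1]

theorem trace_pauli1_of_ne_zero {j : Fin 4} (hj : j ≠ 0) : (pauli1 j).trace = 0 := by
  fin_cases j <;> simp_all [pauli1, Matrix.trace_fin_two]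

theorem exists_pauli1_mul_eq_smul (a b : ZMod 2 × ZMod 2) :
    ∃ c : ℂ, pauli1 (pauliLabel a) * pauli1 (pauliLabel b) = c • pauli1 (pauliLabel (a + b)) := by
  refine ⟨(pauli1 (pauliLabel (a + b)) * (pauli1 (pauliLabel a) * pauli1 (pauliLabel b))).trace / 2,
    ?_⟩
  obtain ⟨j, rfl⟩ := pauliLabel.symm.surjective a
  obtain ⟨k, rfl⟩ := pauliLabel.symm.surjective b
  have hadd : pauliLabel (pauliLabel.symm j + pauliLabel.symm k) =
      (![![0, 1, 2, 3], ![1, 0, 3, 2], ![2, 3, 0, 1], ![3, 2, 1, 0]] j k : Fin 4) := by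
    revert j k
    decide
  simp only [Equiv.apply_symm_apply, hadd]
  fin_cases j <;> fin_cases k <;> ext x y <;> fin_cases x <;> fin_cases y <;>
    simp [pauli1, Matrix.trace_fin_two]

theorem pauli1_mul_comm (a b : ZMod 2 × ZMod 2) :
    pauli1 (pauliLabel a) * pauli1 (pauliLabel b) =
      symplecticChar qubitForm a b • (pauli1 (pauliLabel b) * pauli1 (pauliLabel a)) := by
  obtain ⟨j, rfl⟩ := pauliLabel.symm.surjective a
  obtain ⟨k, rfl⟩ := pauliLabel.symm.surjective b
  simp only [Equiv.apply_symm_apply, symplecticChar_apply]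
  fin_cases j <;> fin_cases k <;> ext x y <;> fin_cases x <;> fin_cases y <;>
    simp +decide [pauli1]

variable {q : ℕ}

/-- The Pauli operator labelled by a point of the phase space. -/
def pauli (a : PhaseSpace q) : Mat q :=
  piKronecker fun i => pauli1 (pauliLabel (a i))

theorem pauli_zero : pauli (0 : PhaseSpace q) = 1 :=
  piKronecker_one

theorem isHermitian_pauli (a : PhaseSpace q) : (pauli a).IsHermitian := by
  simp only [Matrix.IsHermitian, pauli, conjTranspose_piKronecker, (isHermitian_pauli1 _).eq]

theorem pauli_mul_self (a : PhaseSpace q) : pauli a * pauli a = 1 := by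
  simp only [pauli, piKronecker_mul_piKronecker, pauli1_mul_self, piKronecker_one]

theorem trace_pauli_of_ne_zero {a : PhaseSpace q} (ha : a ≠ 0) : (pauli a).trace = 0 := by
  obtain ⟨i, hi⟩ := Function.ne_iff.mp ha
  rw [pauli, trace_piKronecker]
  exact Finset.prod_eq_zero (Finset.mem_univ i)
    (trace_pauli1_of_ne_zero (pauliLabel.injective.ne hi))

theorem pauli_mul_comm (a b : PhaseSpace q) :
    pauli a * pauli b = symplecticChar (symplecticForm q) a b • (pauli b * pauli a) := by
  simp only [pauli, piKronecker_mul_piKronecker, pauli1_mul_comm (a _), piKronecker_smul,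
    symplecticChar_symplecticForm]

theorem exists_pauli_mul_eq_smul (a b : PhaseSpace q) :
    ∃ c : ℂ, pauli a * pauli b = c • pauli (a + b) := by
  choose c hc using fun i => exists_pauli1_mul_eq_smul (a i) (b i)
  refine ⟨∏ i, c i, ?_⟩
  simp only [pauli, piKronecker_mul_piKronecker, hc, piKronecker_smul, Pi.add_apply]

theorem exists_I_smul_pauli_mul_eq_smul {a b : PhaseSpace q} (h : symplecticForm q a b ≠ 0) :
    ∃ e : ℂ, e ^ 2 = 1 ∧ Complex.I • (pauli a * pauli b) = e • pauli (a + b) := by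
  obtain ⟨c, hc⟩ := exists_pauli_mul_eq_smul a b
  have hanti : pauli b * pauli a = -(pauli a * pauli b) := by
    rw [pauli_mul_comm a b, symplecticChar_apply, if_neg h, neg_one_smul, neg_neg]
  have hsq : (c ^ 2 : ℂ) • (1 : Mat q) = (-1 : ℂ) • 1 :=
    calc (c ^ 2 : ℂ) • (1 : Mat q) = (pauli a * pauli b) * (pauli a * pauli b) := by
          rw [hc, Matrix.smul_mul, Matrix.mul_smul, smul_smul, pauli_mul_self, sq]
      _ = pauli a * (pauli b * pauli a) * pauli b := by simp only [Matrix.mul_assoc]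
      _ = -(pauli a * pauli a * (pauli b * pauli b)) := by
          rw [hanti, Matrix.mul_neg, Matrix.neg_mul]
          simp only [Matrix.mul_assoc]
      _ = (-1 : ℂ) • 1 := by rw [pauli_mul_self, pauli_mul_self, Matrix.mul_one, neg_one_smul]
  have hc2 : c ^ 2 = -1 := smul_left_injective ℂ (one_ne_zero (α := Mat q)) hsq
  exact ⟨Complex.I * c, by rw [mul_pow, Complex.I_sq, hc2, neg_one_mul, neg_neg],
    by rw [hc, smul_smul]⟩

theorem sqrtd_mul_sqrtd : sqrtd q * sqrtd q = 2 ^ q := by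
  rw [sqrtd, ← Complex.ofReal_mul, Real.mul_self_sqrt (by positivity)]
  push_cast
  rfl

theorem sqrtd_ne_zero : sqrtd q ≠ 0 :=
  left_ne_zero_of_mul (sqrtd_mul_sqrtd.trans_ne (pow_ne_zero q two_ne_zero))

/-- The normalized Pauli operator labelled by a point of the phase space. -/
def normalizedPauli (a : PhaseSpace q) : Mat q :=
  (sqrtd q)⁻¹ • pauli a

theorem isHermitian_normalizedPauli (a : PhaseSpace q) : (normalizedPauli a).IsHermitian := by
  have hstar : star (sqrtd q)⁻¹ = (sqrtd q)⁻¹ := by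
    rw [star_inv₀, sqrtd, Complex.star_def, Complex.conj_ofReal]
  rw [Matrix.IsHermitian, normalizedPauli, Matrix.conjTranspose_smul, hstar,
    (isHermitian_pauli a).eq]

theorem normalizedPauli_mul_comm (a b : PhaseSpace q) :
    normalizedPauli a * normalizedPauli b =
      symplecticChar (symplecticForm q) a b • (normalizedPauli b * normalizedPauli a) := by
  simp only [normalizedPauli, Matrix.smul_mul, Matrix.mul_smul, pauli_mul_comm a b]
  module

theorem trace_normalizedPauli_mul (a b : PhaseSpace q) :
    (normalizedPauli a * normalizedPauli b).trace = if a = b then 1 else 0 := by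
  simp only [normalizedPauli, Matrix.smul_mul, Matrix.mul_smul, smul_smul, Matrix.trace_smul,
    ← mul_inv, sqrtd_mul_sqrtd, smul_eq_mul]
  split_ifs with h
  · have htrace : (1 : Mat q).trace = 2 ^ q := by
      rw [Matrix.trace_one, Fintype.card_pi_const, Fintype.card_fin, Nat.cast_pow, Nat.cast_ofNat]
    rw [h, pauli_mul_self, htrace, inv_mul_cancel₀ (pow_ne_zero q two_ne_zero)]
  · obtain ⟨c, hc⟩ := exists_pauli_mul_eq_smul a b
    have hab : a + b ≠ 0 := by rwa [← ZModModule.sub_eq_add, sub_ne_zero]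
    rw [hc, Matrix.trace_smul, trace_pauli_of_ne_zero hab, smul_zero, mul_zero]

theorem eq_of_normalizedPauli_eq_smul {a b : PhaseSpace q} {c : ℂ}
    (h : normalizedPauli a = c • normalizedPauli b) : a = b := by
  by_contra hab
  have htrace := trace_normalizedPauli_mul a a
  nth_rw 2 [h] at htrace
  rw [Matrix.mul_smul, Matrix.trace_smul, trace_normalizedPauli_mul, if_neg hab, if_pos rfl,
    smul_zero] at htrace
  exact zero_ne_one htrace

theorem injective_normalizedPauli : Function.Injective (normalizedPauli (q := q)) := fun _ _ h =>
  eq_of_normalizedPauli_eq_smul (h.trans (one_smul ℂ _).symm)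

theorem sigmaHat_eq_range : sigmaHat q = Set.range normalizedPauli := by
  refine Set.ext fun M => ⟨?_, ?_⟩
  · rintro ⟨j, rfl⟩
    refine ⟨fun i => pauliLabel.symm (j i), ?_⟩
    simp only [normalizedPauli, pauli, Equiv.apply_symm_apply]
    rfl
  · rintro ⟨a, rfl⟩
    exact ⟨fun i => pauliLabel (a i), rfl⟩

theorem sigmaSet_eq_image : sigmaSet q = normalizedPauli '' {0}ᶜ := by
  have hzero : sigma0 q = normalizedPauli 0 := by rw [sigma0, normalizedPauli, pauli_zero]
  rw [Set.image_compl_eq_range_sdiff_image injective_normalizedPauli, Set.image_singleton,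
    sigmaSet, sigmaHat_eq_range, hzero]

end Pauli

section CliffordAction

variable {q : ℕ}

theorem isUnit_normalizedPauli (a : PhaseSpace q) : IsUnit (normalizedPauli a) :=
  (IsUnit.of_mul_eq_one _ (pauli_mul_self a)).smul (Units.mk0 _ (inv_ne_zero sqrtd_ne_zero))

/-- Conjugation by `U` permutes the normalized Pauli operators up to sign, and their labels by
`π`. -/
def PermutesPaulis (U : Mat q) (π : Equiv.Perm (PhaseSpace q)) : Prop :=
  ∀ a, ∃ e : ℂ, e ^ 2 = 1 ∧ U * normalizedPauli a * Uᴴ = e • normalizedPauli (π a)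

theorem PermutesPaulis.mem_cliff {U : Mat q} {π : Equiv.Perm (PhaseSpace q)}
    (h : PermutesPaulis U π) (hU : U ∈ Matrix.unitaryGroup (Idx q) ℂ) : U ∈ Cliff q := by
  refine ⟨hU, ?_⟩
  rw [sigmaHat_eq_range]
  rintro _ ⟨a, rfl⟩
  obtain ⟨e, he, hconj⟩ := h a
  refine ⟨_, Set.mem_range_self (π a), (sq_eq_one_iff.mp he).imp ?_ ?_⟩
  · rintro rfl
    rw [hconj, one_smul]
  · rintro rfl
    rw [hconj, neg_one_smul]

theorem PermutesPaulis.mem_isometryGroup {U : Mat q} {π : Equiv.Perm (PhaseSpace q)}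
    (h : PermutesPaulis U π) (hU : U ∈ Matrix.unitaryGroup (Idx q) ℂ) :
    π ∈ isometryGroup (symplecticForm q) := fun a b => by
  let conj := Unitary.conjStarAlgAut ℂ (Mat q) ⟨U, hU⟩
  obtain ⟨e, he, ha⟩ := h a
  obtain ⟨e', he', hb⟩ := h b
  have hconj := congrArg conj (normalizedPauli_mul_comm a b)
  change conj (normalizedPauli a) = _ at ha
  change conj (normalizedPauli b) = _ at hb
  have hee : (e * e') ^ 2 = 1 := by rw [mul_pow, he, he', one_mul]
  have hne : (e * e') • (normalizedPauli (π b) * normalizedPauli (π a)) ≠ 0 :=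
    smul_ne_zero (ne_zero_pow two_ne_zero (hee.trans_ne one_ne_zero))
      ((isUnit_normalizedPauli _).mul (isUnit_normalizedPauli _)).ne_zero
  have hchar : symplecticChar (symplecticForm q) (π a) (π b) =
      symplecticChar (symplecticForm q) a b := by
    refine smul_left_injective ℂ hne ?_
    rw [map_smul, map_mul, map_mul, ha, hb] at hconj
    simp only [Matrix.smul_mul, Matrix.mul_smul, normalizedPauli_mul_comm (π a)] at hconj ⊢
    convert hconj using 1 <;> module
  have hzero : ∀ x y : ZMod 2, (x = 0 ↔ y = 0) → x = y := by decide
  exact hzero _ _ (by rw [← symplecticChar_eq_one_iff, hchar, symplecticChar_eq_one_iff])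

theorem exists_permutesPaulis {U : Mat q} (hU : U ∈ Cliff q) : ∃ π, PermutesPaulis U π := by
  obtain ⟨hunit, hpauli⟩ := hU
  let conj := Unitary.conjStarAlgAut ℂ (Mat q) ⟨U, hunit⟩
  have hlabel (a : PhaseSpace q) :
      ∃ b, ∃ e : ℂ, e ^ 2 = 1 ∧ conj (normalizedPauli a) = e • normalizedPauli b := by
    rw [sigmaHat_eq_range] at hpauli
    obtain ⟨_, ⟨b, rfl⟩, h | h⟩ := hpauli _ (Set.mem_range_self a)
    · exact ⟨b, 1, one_pow 2, h.trans (one_smul ℂ _).symm⟩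
    · exact ⟨b, -1, neg_one_sq, h.trans (neg_one_smul ℂ _).symm⟩
  choose f e he hf using hlabel
  have hinj : Function.Injective f := fun a b hab => by
    refine eq_of_normalizedPauli_eq_smul (c := e a * e b) (EmbeddingLike.injective conj ?_)
    rw [map_smul, hf a, hf b, hab, smul_smul, mul_assoc, ← sq, he, mul_one]
  exact ⟨Equiv.ofBijective f (Finite.injective_iff_bijective.mp hinj), fun a => ⟨e a, he a, hf a⟩⟩

theorem permutesPaulis_quarterTurn_pauli (c : PhaseSpace q) :
    PermutesPaulis (quarterTurn (pauli c)) (symplecticTransvection isAlt_symplecticForm c) := by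
  intro a
  simp only [normalizedPauli, Matrix.mul_smul, Matrix.smul_mul]
  by_cases h : symplecticForm q c a = 0
  · have hcomm := pauli_mul_comm c a
    rw [symplecticChar_apply, if_pos h, one_smul] at hcomm
    refine ⟨1, one_pow 2, ?_⟩
    rw [quarterTurn_mul_mul_conjTranspose_of_commute (isHermitian_pauli c) (pauli_mul_self c) hcomm,
      symplecticTransvection_of_eq_zero _ h, one_smul]
  · have hanti := pauli_mul_comm c a
    rw [symplecticChar_apply, if_neg h, neg_one_smul] at hanti
    obtain ⟨e, he, hmul⟩ := exists_I_smul_pauli_mul_eq_smul h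
    refine ⟨e, he, ?_⟩
    rw [quarterTurn_mul_mul_conjTranspose_of_anticommute (isHermitian_pauli c) (pauli_mul_self c)
      hanti, symplecticTransvection_of_ne_zero _ h, hmul, add_comm c, smul_comm]

/-- The linear map sending the basis vector at `a` to `σ ⊗ σ`, where `σ` is the normalized Pauli
operator labelled by `a`. -/
def diagonalEmbedding (q : ℕ) : EuclideanSpace ℂ (PhaseSpace q) →ₗ[ℂ] BMat q :=
  Fintype.linearCombination ℂ (fun a => normalizedPauli a ⊗ₖ normalizedPauli a) ∘ₗ
    (WithLp.linearEquiv 2 ℂ (PhaseSpace q → ℂ)).toLinearMap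

theorem diagonalEmbedding_apply (l : EuclideanSpace ℂ (PhaseSpace q)) :
    diagonalEmbedding q l = ∑ a, l a • (normalizedPauli a ⊗ₖ normalizedPauli a) :=
  rfl

theorem hs_normalizedPauli_kronecker_self (a b : PhaseSpace q) :
    hs (normalizedPauli a ⊗ₖ normalizedPauli a) (normalizedPauli b ⊗ₖ normalizedPauli b) =
      if a = b then 1 else 0 := by
  rw [hs, Matrix.conjTranspose_kronecker, ← Matrix.mul_kronecker_mul, Matrix.trace_kronecker,
    (isHermitian_normalizedPauli a).eq, trace_normalizedPauli_mul, mul_ite_zero, mul_one]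
  split_ifs <;> rfl

theorem hs_diagonalEmbedding (l k : EuclideanSpace ℂ (PhaseSpace q)) :
    hs (diagonalEmbedding q l) (diagonalEmbedding q k) = inner ℂ l k := by
  have hexpand : hs (diagonalEmbedding q l) (diagonalEmbedding q k) =
      ∑ b, ∑ a, k b * (star (l a) *
        hs (normalizedPauli a ⊗ₖ normalizedPauli a) (normalizedPauli b ⊗ₖ normalizedPauli b)) := by
    simp only [hs, diagonalEmbedding_apply, Matrix.conjTranspose_sum, Matrix.conjTranspose_smul,
      Finset.sum_mul, Finset.mul_sum, Matrix.trace_sum, Matrix.smul_mul, Matrix.mul_smul,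
      Matrix.trace_smul, smul_eq_mul]
  simp only [hexpand, hs_normalizedPauli_kronecker_self, mul_ite, mul_one, mul_zero,
    Finset.sum_ite_eq', Finset.mem_univ, if_true, PiLp.inner_apply, RCLike.inner_apply]
  rfl

theorem injective_diagonalEmbedding : Function.Injective (diagonalEmbedding q) := by
  refine (injective_iff_map_eq_zero _).mpr fun l hl => inner_self_eq_zero (𝕜 := ℂ).mp ?_
  rw [← hs_diagonalEmbedding, hl, hs, Matrix.mul_zero, Matrix.trace_zero]

theorem twoCopy_kronecker (U A B : Mat q) :
    twoCopy U (A ⊗ₖ B) = (U * A * Uᴴ) ⊗ₖ (U * B * Uᴴ) := by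
  change (U ⊗ₖ U) * (A ⊗ₖ B) * (U ⊗ₖ U)ᴴ = _
  rw [Matrix.conjTranspose_kronecker, ← Matrix.mul_kronecker_mul, ← Matrix.mul_kronecker_mul]

theorem PermutesPaulis.twoCopy_diagonalEmbedding {U : Mat q} {π : Equiv.Perm (PhaseSpace q)}
    (h : PermutesPaulis U π) (l : EuclideanSpace ℂ (PhaseSpace q)) :
    twoCopy U (diagonalEmbedding q l) = diagonalEmbedding q (permute ℂ π l) := by
  rw [diagonalEmbedding_apply, diagonalEmbedding_apply, map_sum]
  refine (Finset.sum_congr rfl fun a _ => ?_).trans (Equiv.sum_comp π fun b =>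
    permute ℂ π l b • (normalizedPauli b ⊗ₖ normalizedPauli b))
  obtain ⟨e, he, hconj⟩ := h a
  rw [map_smul, twoCopy_kronecker, hconj, Matrix.smul_kronecker, Matrix.kronecker_smul, smul_smul,
    smul_smul, mul_assoc, ← sq, he, mul_one, permute_apply_apply]

theorem isInvariant_map_diagonalEmbedding {E : Submodule ℂ (EuclideanSpace ℂ (PhaseSpace q))}
    (hE : isometryGroup (symplecticForm q) ≤ permStabilizer E) :
    IsInvariant q (E.map (diagonalEmbedding q)) := by
  rintro U hU _ ⟨l, hl, rfl⟩
  obtain ⟨π, hπ⟩ := exists_permutesPaulis hU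
  rw [hπ.twoCopy_diagonalEmbedding]
  exact Submodule.mem_map_of_mem
    (mem_permStabilizer_iff.mp (hE (hπ.mem_isometryGroup hU.1)) l hl)

theorem transvectionGroup_le_permStabilizer_comap_diagonalEmbedding {W : Submodule ℂ (BMat q)}
    (hW : IsInvariant q W) :
    transvectionGroup isAlt_symplecticForm ≤ permStabilizer (W.comap (diagonalEmbedding q)) := by
  refine (Subgroup.closure_le _).mpr ?_
  rintro _ ⟨c, rfl⟩
  refine mem_permStabilizer_iff.mpr fun l hl => ?_
  have hc := permutesPaulis_quarterTurn_pauli c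
  rw [Submodule.mem_comap, ← hc.twoCopy_diagonalEmbedding]
  exact hW _ (hc.mem_cliff (quarterTurn_mem_unitaryGroup (isHermitian_pauli c) (pauli_mul_self c)))
    _ hl

theorem carriesIrred_map_diagonalEmbedding
    {E : Submodule ℂ (EuclideanSpace ℂ (PhaseSpace q))} (hE : E ≠ ⊥)
    (hinv : isometryGroup (symplecticForm q) ≤ permStabilizer E)
    (hirr : ∀ W ≤ E, transvectionGroup isAlt_symplecticForm ≤ permStabilizer W → W = ⊥ ∨ W = E) :
    CarriesIrred q (E.map (diagonalEmbedding q)) := by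
  refine ⟨((Submodule.map_injective_of_injective injective_diagonalEmbedding).ne_iff'
    (Submodule.map_bot _)).mpr hE, isInvariant_map_diagonalEmbedding hinv,
    fun W hWE hW => ?_⟩
  have hmap : (W.comap (diagonalEmbedding q)).map (diagonalEmbedding q) = W :=
    Submodule.map_comap_eq_self (hWE.trans LinearMap.map_le_range)
  have hcomap : W.comap (diagonalEmbedding q) ≤ E :=
    (Submodule.comap_mono hWE).trans_eq
      (Submodule.comap_map_eq_of_injective injective_diagonalEmbedding E)
  rcases hirr _ hcomap (transvectionGroup_le_permStabilizer_comap_diagonalEmbedding hW) with h | h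
  · exact .inl (by rw [← hmap, h, Submodule.map_bot])
  · exact .inr (by rw [← hmap, h])

end CliffordAction

section DiagonalSector

variable {q : ℕ}

theorem NSet_normalizedPauli (t : PhaseSpace q) :
    NSet (normalizedPauli t) = normalizedPauli '' {a | symplecticForm q t a ≠ 0} := by
  have hanti (a : PhaseSpace q) :
      normalizedPauli a * normalizedPauli t + normalizedPauli t * normalizedPauli a = 0 ↔
        symplecticForm q t a ≠ 0 := by
    have hne := ((isUnit_normalizedPauli a).mul (isUnit_normalizedPauli t)).ne_zero
    rw [normalizedPauli_mul_comm t a, ← one_smul ℂ (normalizedPauli a * normalizedPauli t),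
      smul_smul, mul_one, ← add_smul, smul_eq_zero_iff_left hne, symplecticChar_apply]
    split_ifs with h <;> simp [h]
  ext M
  rw [NSet, sigmaSet_eq_image, Set.mem_ofPred_eq]
  constructor
  · rintro ⟨⟨a, -, rfl⟩, ha⟩
    exact ⟨a, (hanti a).mp ha, rfl⟩
  · rintro ⟨a, ha, rfl⟩
    refine ⟨⟨a, ?_, rfl⟩, (hanti a).mpr ha⟩
    rintro rfl
    exact ha (map_zero _)

theorem finsum_mem_sigmaSet {M : Type*} [AddCommMonoid M] (f : Mat q → M) :
    ∑ᶠ σ ∈ sigmaSet q, f σ = ∑ a ∈ {0}ᶜ, f (normalizedPauli a) := by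
  rw [sigmaSet_eq_image, finsum_mem_image injective_normalizedPauli.injOn,
    ← finsum_mem_coe_finset, Finset.coe_compl, Finset.coe_singleton]

theorem finsum_mem_NSet {M : Type*} [AddCommMonoid M] (t : PhaseSpace q) (f : Mat q → M) :
    ∑ᶠ σ ∈ NSet (normalizedPauli t), f σ =
      ∑ a with symplecticForm q t a ≠ 0, f (normalizedPauli a) := by
  rw [NSet_normalizedPauli, finsum_mem_image injective_normalizedPauli.injOn,
    ← finsum_mem_coe_finset, Finset.coe_filter_univ]

theorem finsum_mem_sigmaSet_smul_kronecker_self {lam : Mat q → ℂ}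
    {l : EuclideanSpace ℂ (PhaseSpace q)} (hl0 : l 0 = 0)
    (hl : ∀ a ≠ 0, lam (normalizedPauli a) = l a) :
    ∑ᶠ σ ∈ sigmaSet q, lam σ • (σ ⊗ₖ σ) = diagonalEmbedding q l := by
  rw [finsum_mem_sigmaSet, diagonalEmbedding_apply, Fintype.sum_eq_add_sum_compl 0, hl0, zero_smul,
    zero_add]
  exact Finset.sum_congr rfl fun a ha => by rw [hl a (by simpa using ha)]

theorem finsum_eq_zero_and_finsum_NSet_eq_iff {lam : Mat q → ℂ} {μ : ℂ}
    {l : EuclideanSpace ℂ (PhaseSpace q)} (hl0 : l 0 = 0)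
    (hl : ∀ a ≠ 0, lam (normalizedPauli a) = l a) :
    (∑ᶠ σ ∈ sigmaSet q, lam σ = 0 ∧
        ∀ τ ∈ sigmaSet q, ∑ᶠ σ ∈ NSet τ, lam σ = -(μ / 2) * lam τ) ↔
      l ∈ puncturedEigenspace (symplecticForm q) μ := by
  have hsum : ∑ᶠ σ ∈ sigmaSet q, lam σ = ∑ a, l a := by
    rw [finsum_mem_sigmaSet, Fintype.sum_eq_add_sum_compl 0, hl0, zero_add]
    exact Finset.sum_congr rfl fun a ha => hl a (by simpa using ha)
  have hnset (t : PhaseSpace q) :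
      ∑ᶠ σ ∈ NSet (normalizedPauli t), lam σ = ∑ a with symplecticForm q t a ≠ 0, l a := by
    rw [finsum_mem_NSet]
    refine Finset.sum_congr rfl fun a ha => hl a ?_
    rintro rfl
    exact (Finset.mem_filter.mp ha).2 (map_zero _)
  rw [mem_puncturedEigenspace_iff_sum_filter, hsum, sigmaSet_eq_image, Set.forall_mem_image]
  simp only [hl0, hnset, true_and, Set.mem_compl_iff, Set.mem_singleton_iff]
  exact and_congr_right' (forall₂_congr fun a ha => by rw [hl a ha])

theorem span_eq_map_puncturedEigenspace (μ : ℂ) :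
    Submodule.span ℂ {v | ∃ lam : Mat q → ℂ, v = ∑ᶠ σ ∈ sigmaSet q, lam σ • (σ ⊗ₖ σ) ∧
      ∑ᶠ σ ∈ sigmaSet q, lam σ = 0 ∧
      ∀ τ ∈ sigmaSet q, ∑ᶠ σ ∈ NSet τ, lam σ = -(μ / 2) * lam τ} =
    (puncturedEigenspace (symplecticForm q) μ).map (diagonalEmbedding q) := by
  convert Submodule.span_eq _
  ext v
  constructor
  · rintro ⟨lam, rfl, hlam⟩
    let l : EuclideanSpace ℂ (PhaseSpace q) :=
      WithLp.toLp 2 fun a => if a = 0 then 0 else lam (normalizedPauli a)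
    have hl0 : l 0 = 0 := if_pos rfl
    have hl (a : PhaseSpace q) (ha : a ≠ 0) : lam (normalizedPauli a) = l a := (if_neg ha).symm
    exact ⟨l, (finsum_eq_zero_and_finsum_NSet_eq_iff hl0 hl).mp hlam,
      (finsum_mem_sigmaSet_smul_kronecker_self hl0 hl).symm⟩
  · rintro ⟨l, hl, rfl⟩
    have hlam (a : PhaseSpace q) (_ : a ≠ 0) :
        Function.extend normalizedPauli l 0 (normalizedPauli a) = l a :=
      injective_normalizedPauli.extend_apply _ _ _
    exact ⟨_, (finsum_mem_sigmaSet_smul_kronecker_self hl.2 hlam).symm,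
      (finsum_eq_zero_and_finsum_NSet_eq_iff hl.2 hlam).mpr hl⟩

theorem V0diag_eq_map :
    V0diag q = (ℂ ∙ indicatorNeZero (PhaseSpace q)).map (diagonalEmbedding q) := by
  have hsum := finsum_mem_sigmaSet_smul_kronecker_self (q := q) (lam := 1)
    (l := indicatorNeZero (PhaseSpace q))
    (by rw [indicatorNeZero_apply, if_pos rfl, sub_self])
    fun a ha => by rw [indicatorNeZero_apply, if_neg ha, sub_zero, Pi.one_apply]
  simp only [Pi.one_apply, one_smul] at hsum
  rw [V0diag, hsum, Submodule.map_span, Set.image_singleton]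

theorem V1diag_eq_map :
    V1diag q = (puncturedEigenspace (symplecticForm q) (2 ^ q)).map (diagonalEmbedding q) :=
  span_eq_map_puncturedEigenspace (2 ^ q)

theorem V2diag_eq_map :
    V2diag q = (puncturedEigenspace (symplecticForm q) (-2 ^ q)).map (diagonalEmbedding q) := by
  rw [← span_eq_map_puncturedEigenspace, neg_div, neg_neg, V2diag]

theorem Vdiag_eq_map : Vdiag q = (vanishingAt (0 : PhaseSpace q)).map (diagonalEmbedding q) := by
  refine le_antisymm (Submodule.span_le.mpr ?_) ?_
  · rintro _ ⟨τ, hτ, rfl⟩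
    rw [sigmaSet_eq_image] at hτ
    obtain ⟨a, ha, rfl⟩ := hτ
    refine ⟨EuclideanSpace.single a 1, ?_, ?_⟩
    · exact mem_vanishingAt_iff.mpr (by simpa using Ne.symm ha)
    · simp [diagonalEmbedding_apply]
  · rintro _ ⟨l, hl, rfl⟩
    rw [diagonalEmbedding_apply]
    refine Submodule.sum_mem _ fun a _ => ?_
    rcases eq_or_ne a 0 with rfl | ha
    · rw [mem_vanishingAt_iff.mp hl, zero_smul]
      exact Submodule.zero_mem _
    · refine Submodule.smul_mem _ _ (Submodule.subset_span ⟨_, ?_, rfl⟩)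
      rw [sigmaSet_eq_image]
      exact Set.mem_image_of_mem _ ha

theorem V0diag_sup_V1diag_sup_V2diag (hq : 1 ≤ q) :
    V0diag q ⊔ V1diag q ⊔ V2diag q = Vdiag q := by
  have : Nonempty (Fin q) := ⟨⟨0, hq⟩⟩
  rw [V0diag_eq_map, V1diag_eq_map, V2diag_eq_map, Vdiag_eq_map, ← Submodule.map_sup,
    ← Submodule.map_sup, span_indicatorNeZero_sup_puncturedEigenspaces isAlt_symplecticForm
      separatingLeft_symplecticForm two_pow_sq_eq_card_phaseSpace]

theorem hs_eq_zero_of_isOrtho {E F : Submodule ℂ (EuclideanSpace ℂ (PhaseSpace q))} (hEF : E ⟂ F) :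
    ∀ x ∈ E.map (diagonalEmbedding q), ∀ y ∈ F.map (diagonalEmbedding q), hs x y = 0 := by
  rintro _ ⟨l, hl, rfl⟩ _ ⟨k, hk, rfl⟩
  rw [hs_diagonalEmbedding]
  exact Submodule.isOrtho_iff_inner_eq.mp hEF l hl k hk

theorem hs_eq_zero_of_mem_V0diag_of_mem_V1diag : ∀ x ∈ V0diag q, ∀ y ∈ V1diag q, hs x y = 0 := by
  rw [V0diag_eq_map, V1diag_eq_map]
  exact hs_eq_zero_of_isOrtho (isOrtho_span_indicatorNeZero_puncturedEigenspace _)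

theorem hs_eq_zero_of_mem_V0diag_of_mem_V2diag : ∀ x ∈ V0diag q, ∀ y ∈ V2diag q, hs x y = 0 := by
  rw [V0diag_eq_map, V2diag_eq_map]
  exact hs_eq_zero_of_isOrtho (isOrtho_span_indicatorNeZero_puncturedEigenspace _)

theorem hs_eq_zero_of_mem_V1diag_of_mem_V2diag : ∀ x ∈ V1diag q, ∀ y ∈ V2diag q, hs x y = 0 := by
  rw [V1diag_eq_map, V2diag_eq_map]
  exact hs_eq_zero_of_isOrtho (isOrtho_puncturedEigenspace isAlt_symplecticForm
    (self_ne_neg.mpr (pow_ne_zero q two_ne_zero)))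

theorem two_mul_finrank_map_puncturedEigenspace {μ : ℂ}
    (hμ : μ ^ 2 = Fintype.card (PhaseSpace q)) (hμ1 : μ ≠ -1) :
    2 * (Module.finrank ℂ
      ((puncturedEigenspace (symplecticForm q) μ).map (diagonalEmbedding q)) : ℂ) =
      μ ^ 2 + μ - 2 := by
  rw [← (Submodule.equivMapOfInjective _ injective_diagonalEmbedding _).finrank_eq]
  exact two_mul_finrank_puncturedEigenspace isAlt_symplecticForm separatingLeft_symplecticForm
    hμ hμ1

theorem two_mul_finrank_V1diag_add_two :
    2 * Module.finrank ℂ (V1diag q) + 2 = 2 ^ q * (2 ^ q + 1) := by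
  have hne : (2 : ℂ) ^ q ≠ -1 := by norm_cast
  have h := two_mul_finrank_map_puncturedEigenspace two_pow_sq_eq_card_phaseSpace hne
  rw [← V1diag_eq_map] at h
  have h' : (2 * Module.finrank ℂ (V1diag q) + 2 : ℂ) = 2 ^ q * (2 ^ q + 1) := by
    linear_combination h
  exact_mod_cast h'

theorem two_mul_finrank_V2diag_add_two (hq : 1 ≤ q) :
    2 * Module.finrank ℂ (V2diag q) + 2 = 2 ^ q * (2 ^ q - 1) := by
  have hne : -(2 : ℂ) ^ q ≠ -1 := by
    rw [Ne, neg_inj]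
    exact_mod_cast (Nat.one_lt_two_pow (Nat.one_le_iff_ne_zero.mp hq)).ne'
  have h := two_mul_finrank_map_puncturedEigenspace
    ((neg_sq ((2 : ℂ) ^ q)).trans two_pow_sq_eq_card_phaseSpace) hne
  rw [← V2diag_eq_map] at h
  have h' : (2 * Module.finrank ℂ (V2diag q) + 2 : ℂ) = 2 ^ q * (2 ^ q - 1) := by
    linear_combination h
  have hpow : ((2 ^ q - 1 : ℕ) : ℂ) = 2 ^ q - 1 := by
    rw [Nat.cast_sub Nat.one_le_two_pow]
    push_cast
    rfl
  rw [← hpow] at h'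
  exact_mod_cast h'

theorem V1diag_ne_bot (hq : 1 ≤ q) : V1diag q ≠ ⊥ := by
  intro h
  have hfinrank := two_mul_finrank_V1diag_add_two (q := q)
  rw [h, finrank_bot] at hfinrank
  nlinarith [Nat.pow_le_pow_right two_pos hq]

theorem V2diag_eq_bot_iff (hq : 1 ≤ q) : V2diag q = ⊥ ↔ q = 1 := by
  rw [← Submodule.finrank_eq_zero]
  have hfinrank := two_mul_finrank_V2diag_add_two hq
  constructor
  · intro h
    by_contra hq1
    have hpow : 2 ^ 2 ≤ 2 ^ q := Nat.pow_le_pow_right two_pos (by lia)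
    have hmul := Nat.mul_le_mul hpow (Nat.sub_le_sub_right hpow 1)
    lia
  · rintro rfl
    lia

theorem carriesIrred_V0diag (hq : 1 ≤ q) : CarriesIrred q (V0diag q) := by
  have : Nonempty (Fin q) := ⟨⟨0, hq⟩⟩
  have hatom : IsAtom (ℂ ∙ indicatorNeZero (PhaseSpace q)) := by
    refine nonzero_span_atom _ fun h => ?_
    obtain ⟨a, ha⟩ := exists_ne (0 : PhaseSpace q)
    have hval := congr($h a)
    rw [indicatorNeZero_apply, if_neg ha, sub_zero] at hval
    exact one_ne_zero hval
  rw [V0diag_eq_map]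
  exact carriesIrred_map_diagonalEmbedding hatom.1
    (isometryGroup_le_permStabilizer_span_indicatorNeZero separatingLeft_symplecticForm)
    fun W hW _ => hatom.le_iff.mp hW

theorem carriesIrred_map_puncturedEigenspace {μ : ℂ}
    (hne : (puncturedEigenspace (symplecticForm q) μ).map (diagonalEmbedding q) ≠ ⊥) :
    CarriesIrred q ((puncturedEigenspace (symplecticForm q) μ).map (diagonalEmbedding q)) :=
  carriesIrred_map_diagonalEmbedding (fun h => hne (by rw [h, Submodule.map_bot]))
    (isometryGroup_le_permStabilizer_puncturedEigenspace separatingLeft_symplecticForm μ)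
    fun _ => eq_bot_or_eq_puncturedEigenspace isAlt_symplecticForm separatingLeft_symplecticForm

theorem carriesIrred_V1diag (hq : 1 ≤ q) : CarriesIrred q (V1diag q) := by
  have hne := V1diag_ne_bot hq
  rw [V1diag_eq_map] at hne ⊢
  exact carriesIrred_map_puncturedEigenspace hne

theorem carriesIrred_V2diag (hq : 2 ≤ q) : CarriesIrred q (V2diag q) := by
  have hne : V2diag q ≠ ⊥ := (V2diag_eq_bot_iff (one_le_two.trans hq)).not.mpr (Nat.ne_of_gt hq)
  rw [V2diag_eq_map] at hne ⊢
  exact carriesIrred_map_puncturedEigenspace hne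

end DiagonalSector

/-- diagonal sector: `V_d = V_0 ⊕ V_1 ⊕ V_2` orthogonally, with the
stated dimensions, each summand invariant and carrying an irreducible subrepresentation;
for `q = 1` one has `V_2 = 0`. -/
theorem statement3 (q : ℕ) (hq : 1 ≤ q) :
    (2 ≤ q →
      V0diag q ⊔ V1diag q ⊔ V2diag q = Vdiag q ∧
      (∀ x ∈ V0diag q, ∀ y ∈ V1diag q, hs x y = 0) ∧
      (∀ x ∈ V0diag q, ∀ y ∈ V2diag q, hs x y = 0) ∧
      (∀ x ∈ V1diag q, ∀ y ∈ V2diag q, hs x y = 0) ∧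
      Module.finrank ℂ ↥(V1diag q) = 2 ^ q * (2 ^ q + 1) / 2 - 1 ∧
      Module.finrank ℂ ↥(V2diag q) = 2 ^ q * (2 ^ q - 1) / 2 - 1 ∧
      CarriesIrred q (V0diag q) ∧ CarriesIrred q (V1diag q) ∧ CarriesIrred q (V2diag q)) ∧
    (q = 1 →
      V2diag q = ⊥ ∧ V0diag q ⊔ V1diag q = Vdiag q ∧
      (∀ x ∈ V0diag q, ∀ y ∈ V1diag q, hs x y = 0) ∧
      Module.finrank ℂ ↥(V1diag q) = 2 ^ q * (2 ^ q + 1) / 2 - 1 ∧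
      CarriesIrred q (V0diag q) ∧ CarriesIrred q (V1diag q)) := by
  have hdecomp := V0diag_sup_V1diag_sup_V2diag hq
  have hdim1 : Module.finrank ℂ (V1diag q) = 2 ^ q * (2 ^ q + 1) / 2 - 1 := by
    rw [← two_mul_finrank_V1diag_add_two]
    lia
  have hdim2 : Module.finrank ℂ (V2diag q) = 2 ^ q * (2 ^ q - 1) / 2 - 1 := by
    rw [← two_mul_finrank_V2diag_add_two hq]
    lia
  have h01 := hs_eq_zero_of_mem_V0diag_of_mem_V1diag (q := q)
  refine ⟨fun hq2 => ⟨hdecomp, h01, hs_eq_zero_of_mem_V0diag_of_mem_V2diag,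
    hs_eq_zero_of_mem_V1diag_of_mem_V2diag, hdim1, hdim2, carriesIrred_V0diag hq,
    carriesIrred_V1diag hq, carriesIrred_V2diag hq2⟩, fun hq1 => ?_⟩
  have hV2 : V2diag q = ⊥ := (V2diag_eq_bot_iff hq).mpr hq1
  rw [hV2, sup_bot_eq] at hdecomp
  exact ⟨hV2, hdecomp, h01, hdim1, carriesIrred_V0diag hq, carriesIrred_V1diag hq⟩

end CliffordPaper
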